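/- There is a positive constant κ_in, independent of n, such that for any a>0 and all integers n large enough, the internal DLA cluster on the comb satisfies P( 𝒟(n − a·√(log n)) ⊄ A(n) ) ≤ d(n)·exp( −κ_in·a²·log n ). -/

import Mathlib

open MeasureTheory ENNReal
open scoped Pointwise

/-- Adjacency in the comb lattice `𝒞`. -/
def combAdj (z w : ℤ × ℤ) : Prop :=
  (z.1 = w.1 ∧ |z.2 - w.2| = 1) ∨ (z.2 = 0 ∧ w.2 = 0 ∧ |z.1 - w.1| = 1)

/-- Degree of a vertex in the comb. -/
def combDeg (z : ℤ × ℤ) : ℕ := if z.2 = 0 then 4 else 2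

open Classical in
/-- One-step transition probability of the simple random walk on the comb. -/
noncomputable def stepProb (z w : ℤ × ℤ) : ℝ≥0∞ :=
  if combAdj z w then ((combDeg z : ℝ≥0∞))⁻¹ else 0

/-- Probability that the walk started at `v` follows the given finite path. -/
noncomputable def pathProb (v : ℤ × ℤ) {n : ℕ} (path : Fin (n + 1) → ℤ × ℤ) : ℝ≥0∞ :=
  (if path 0 = v then 1 else 0) * ∏ i : Fin n, stepProb (path i.castSucc) (path i.succ)

/-- `S` is a simple random walk on the comb started at `v`, under the probability
measure `P` (characterized by its finite-dimensional distributions). -/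
def IsCombWalk {Ω : Type*} [MeasurableSpace Ω] (P : Measure Ω)
    (S : ℕ → Ω → ℤ × ℤ) (v : ℤ × ℤ) : Prop :=
  IsProbabilityMeasure P ∧ (∀ t, Measurable (S t)) ∧
    ∀ (n : ℕ) (path : Fin (n + 1) → ℤ × ℤ),
      P {ω | ∀ i : Fin (n + 1), S i ω = path i} = pathProb v path

/-- `W i`, `i : ℕ`, are i.i.d. simple random walks on the comb started at the origin. -/
def IsIIDCombWalks {Ω : Type*} [MeasurableSpace Ω] (P : Measure Ω)
    (W : ℕ → ℕ → Ω → ℤ × ℤ) : Prop :=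
  IsProbabilityMeasure P ∧ (∀ i t, Measurable (W i t)) ∧
    ∀ (k n : ℕ) (path : Fin k → Fin (n + 1) → ℤ × ℤ),
      P {ω | ∀ i : Fin k, ∀ t : Fin (n + 1), W i t ω = path i t} =
        ∏ i : Fin k, pathProb (0, 0) (path i)

/-- The domain `𝒟(ρ) = D(ρ) ∩ ℤ²`. -/
def combD (ρ : ℝ) : Set (ℤ × ℤ) :=
  {z | |(z.1 : ℝ)| < ρ ∧ |(z.2 : ℝ)| < (ρ - |(z.1 : ℝ)|) ^ 2 / 3}

/-- The boundary `∂𝒟(ρ)`: sites outside `𝒟(ρ)` at graph distance 1 from `𝒟(ρ)`. -/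
def combBoundary (ρ : ℝ) : Set (ℤ × ℤ) :=
  {z | z ∉ combD ρ ∧ ∃ w ∈ combD ρ, combAdj w z}

/-- Hitting time of a set by a trajectory (`⊤` if the set is never hit). -/
noncomputable def hitTime (Λ : Set (ℤ × ℤ)) (traj : ℕ → ℤ × ℤ) : ℕ∞ :=
  ⨅ (m : ℕ) (_ : traj m ∈ Λ), (m : ℕ∞)

/-- The trajectory exits `D` for the first time at the site `z`. -/
def exitsAt (D : Set (ℤ × ℤ)) (z : ℤ × ℤ) (traj : ℕ → ℤ × ℤ) : Prop :=
  ∃ n : ℕ, (∀ m < n, traj m ∈ D) ∧ traj n ∉ D ∧ traj n = z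

/-- Green's function of the walk `S` killed upon exiting `Λ`:
expected number of visits to `y` strictly before the exit time. -/
noncomputable def greenFn {Ω : Type*} [MeasurableSpace Ω] (P : Measure Ω)
    (S : ℕ → Ω → ℤ × ℤ) (Λ : Set (ℤ × ℤ)) (y : ℤ × ℤ) : ℝ≥0∞ :=
  ∑' n : ℕ, P {ω | (∀ m ≤ n, S m ω ∈ Λ) ∧ S n ω = y}

/-- The parent `𝒜(z)` of a vertex of the comb: its unique neighbor closer to the origin. -/
def parent (z : ℤ × ℤ) : ℤ × ℤ :=
  if z.2 = 0 then (z.1 - Int.sign z.1, 0) else (z.1, z.2 - Int.sign z.2)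

/-- First site outside `A` visited by the trajectory: the settlement site of an explorer. -/
noncomputable def settlePoint (A : Set (ℤ × ℤ)) (traj : ℕ → ℤ × ℤ) : ℤ × ℤ :=
  traj (sInf {n | traj n ∉ A})

/-- The internal DLA cluster after `k` explorers with trajectories `W 0, …, W (k-1)`. -/
noncomputable def dlaCluster (W : ℕ → ℕ → ℤ × ℤ) : ℕ → Set (ℤ × ℤ)
  | 0 => ∅
  | k + 1 => dlaCluster W k ∪ {settlePoint (dlaCluster W k) (W k)}

open Classical in
/-- Toppling at `x` for the divisible sandpile: the mass exceeding 1 at `x`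
is distributed equally among the neighbors of `x` in the comb. -/
noncomputable def topple (x : ℤ × ℤ) (μ : ℤ × ℤ → ℝ) : ℤ × ℤ → ℝ := fun z =>
  if μ x ≤ 1 then μ z
  else if z = x then 1
  else if combAdj x z then μ z + (μ x - 1) / (combDeg x : ℝ)
  else μ z

/-- Mass distribution of the divisible sandpile started with mass `mass` at the
origin, after `k` topplings along the sequence `seq`. -/
noncomputable def sandMass (seq : ℕ → ℤ × ℤ) (mass : ℝ) : ℕ → ℤ × ℤ → ℝ
  | 0 => fun z => if z = (0, 0) then mass else 0
  | k + 1 => topple (seq k) (sandMass seq mass k)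

/-- The odometer of the divisible sandpile: total mass emitted from `z`. -/
noncomputable def odometer (seq : ℕ → ℤ × ℤ) (mass : ℝ) (z : ℤ × ℤ) : ℝ :=
  ∑' k : ℕ, if seq k = z then max (sandMass seq mass k z - 1) 0 else 0

/-- The divisible sandpile cluster: sites which emitted positive mass. -/
def sandCluster (seq : ℕ → ℤ × ℤ) (mass : ℝ) : Set (ℤ × ℤ) :=
  {z | 0 < odometer seq mass z}

/-- Euclidean ball `𝔹(R)` of radius `R` in `ℤ²`. -/
def ballZ (R : ℝ) : Set (ℤ × ℤ) :=
  {z | Real.sqrt ((z.1 : ℝ) ^ 2 + (z.2 : ℝ) ^ 2) < R}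

/-- Smallest integer `≥ (ρ - x)²/3`. -/
noncomputable def Lrho (ρ : ℝ) (x : ℤ) : ℕ := ⌈(ρ - (x : ℝ)) ^ 2 / 3⌉₊

/-- Smallest integer `≥ (ρ - |x|)²/3`. -/
noncomputable def LrhoAbs (ρ : ℝ) (x : ℤ) : ℕ := ⌈(ρ - |(x : ℝ)|) ^ 2 / 3⌉₊

/-! ### Part 1: probability -/

noncomputable def pp (p : ℕ → ℤ × ℤ) (t : ℕ) : ℝ≥0∞ :=
  (if p 0 = (0, 0) then 1 else 0) * ∏ s ∈ Finset.range t, stepProb (p s) (p (s + 1))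

lemma pp_eq (p : ℕ → ℤ × ℤ) (n : ℕ) :
    pathProb (0, 0) (fun i : Fin (n + 1) => p i) = pp p n := by
  unfold pathProb pp
  congr 1
  rw [Finset.prod_range]
  rfl

noncomputable def Qop (f : ℤ × ℤ → ℝ≥0∞) (v : ℤ × ℤ) : ℝ≥0∞ :=
  if v.2 = 0 then (f (v.1 + 1, 0) + f (v.1 - 1, 0) + f (v.1, 1) + f (v.1, -1)) / 4
  else (f (v.1, v.2 + 1) + f (v.1, v.2 - 1)) / 2

lemma combAdj_zero (x : ℤ) (w : ℤ × ℤ) : combAdj (x, 0) w ↔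
    w = (x + 1, 0) ∨ w = (x - 1, 0) ∨ w = (x, 1) ∨ w = (x, -1) := by
  obtain ⟨a, b⟩ := w
  simp only [combAdj, Prod.mk.injEq, abs_eq (zero_le_one (α := ℤ))]
  constructor
  · intro h; omega
  · rintro (⟨rfl, rfl⟩ | ⟨rfl, rfl⟩ | ⟨rfl, rfl⟩ | ⟨rfl, rfl⟩) <;> simp

lemma combAdj_ne (x y : ℤ) (hy : y ≠ 0) (w : ℤ × ℤ) : combAdj (x, y) w ↔
    w = (x, y + 1) ∨ w = (x, y - 1) := by
  obtain ⟨a, b⟩ := w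
  simp only [combAdj, Prod.mk.injEq, abs_eq (zero_le_one (α := ℤ))]
  constructor
  · intro h; omega
  · intro h; omega

lemma tsum_step (f : ℤ × ℤ → ℝ≥0∞) (v : ℤ × ℤ) :
    ∑' w, stepProb v w * f w = Qop f v := by
  obtain ⟨x, y⟩ := v
  by_cases hy : y = 0
  · subst hy
    rw [tsum_eq_sum (s := {(x + 1, 0), (x - 1, 0), (x, 1), (x, -1)})]
    · rw [Finset.sum_insert, Finset.sum_insert, Finset.sum_insert, Finset.sum_singleton]
      · simp only [stepProb, combAdj_zero, combDeg, Qop]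
        simp [div_eq_mul_inv, mul_add, mul_comm, add_assoc]
      · simp
      · simp
      · simp; omega
    · intro w hw
      simp only [Finset.mem_insert, Finset.mem_singleton] at hw
      simp only [stepProb, combAdj_zero]
      rw [if_neg hw, zero_mul]
  · rw [tsum_eq_sum (s := {(x, y + 1), (x, y - 1)})]
    · rw [Finset.sum_insert, Finset.sum_singleton]
      · simp only [stepProb, combAdj_ne x y hy, combDeg, Qop]
        simp [div_eq_mul_inv, mul_add, mul_comm, hy]
      · simp; omega
    · intro w hw
      simp only [Finset.mem_insert, Finset.mem_singleton] at hw
      simp only [stepProb, combAdj_ne x y hy]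
      rw [if_neg hw, zero_mul]

lemma tsum_step_one (v : ℤ × ℤ) : ∑' w, stepProb v w = 1 := by
  have := tsum_step (fun _ => 1) v
  simp only [mul_one] at this
  rw [this]
  unfold Qop
  split_ifs
  · have : (1 + 1 + 1 + 1 : ℝ≥0∞) = 4 := by norm_num
    rw [this]; exact ENNReal.div_self (by norm_num) (by norm_num)
  · have : (1 + 1 : ℝ≥0∞) = 2 := by norm_num
    rw [this]; exact ENNReal.div_self (by norm_num) (by norm_num)

set_option linter.unusedSectionVars false

section
variable {Ω : Type*} [MeasurableSpace Ω] {P : Measure Ω} {W : ℕ → ℕ → Ω → ℤ × ℤ}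

def cyl (W : ℕ → ℕ → Ω → ℤ × ℤ) (k n : ℕ) (path : ℕ → ℕ → ℤ × ℤ) : Set Ω :=
  {ω | ∀ i < k, ∀ s ≤ n, W i s ω = path i s}

def pcyl (W : ℕ → ℕ → Ω → ℤ × ℤ) (k t : ℕ) (p : ℕ → ℤ × ℤ) : Set Ω :=
  {ω | ∀ s ≤ t, W k s ω = p s}

lemma meas_pcyl (h : IsIIDCombWalks P W) (k t : ℕ) (p : ℕ → ℤ × ℤ) :
    MeasurableSet (pcyl W k t p) := by
  have : pcyl W k t p = ⋂ s, ⋂ (_ : s ≤ t), W k s ⁻¹' {p s} := by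
    ext ω; simp [pcyl]
  rw [this]
  exact MeasurableSet.iInter fun s => MeasurableSet.iInter fun _ =>
    h.2.1 k s (measurableSet_singleton _)

lemma meas_cyl (h : IsIIDCombWalks P W) (k n : ℕ) (path : ℕ → ℕ → ℤ × ℤ) :
    MeasurableSet (cyl W k n path) := by
  have : cyl W k n path = ⋂ i, ⋂ (_ : i < k), pcyl W i n (path i) := by
    ext ω; simp [pcyl, cyl]
  rw [this]
  exact MeasurableSet.iInter fun s => MeasurableSet.iInter fun _ => meas_pcyl h _ _ _

lemma prob_cyl (h : IsIIDCombWalks P W) (k n : ℕ) (path : ℕ → ℕ → ℤ × ℤ) :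
    P (cyl W k n path) = ∏ i ∈ Finset.range k, pp (path i) n := by
  have := h.2.2 k n (fun i t => path i t)
  rw [Finset.prod_range]
  simp only [pp_eq] at this
  rw [← this]
  congr 1
  ext ω
  simp only [cyl, Set.mem_ofPred_eq]
  constructor
  · intro H i t
    exact H i i.2 t (by omega)
  · intro H i hi s hs
    exact H ⟨i, hi⟩ ⟨s, by omega⟩

lemma pp_update (p : ℕ → ℤ × ℤ) (t : ℕ) (w : ℤ × ℤ) :
    pp (Function.update p (t + 1) w) (t + 1) = pp p t * stepProb (p t) w := by
  unfold pp
  rw [Finset.prod_range_succ, ← mul_assoc]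
  congr 1
  · congr 1
    apply Finset.prod_congr rfl
    intro s hs
    have := Finset.mem_range.1 hs
    rw [Function.update_of_ne (by omega), Function.update_of_ne (by omega)]
  · simp

lemma pcyl_succ (k t : ℕ) (p : ℕ → ℤ × ℤ) :
    pcyl W k t p = ⋃ w, pcyl W k (t + 1) (Function.update p (t + 1) w) := by
  ext ω
  simp only [pcyl, Set.mem_ofPred_eq, Set.mem_iUnion]
  constructor
  · intro H
    refine ⟨W k (t + 1) ω, fun s hs => ?_⟩
    rcases Nat.lt_or_ge t s with h1 | h1
    · obtain rfl : s = t + 1 := by omega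
      simp
    · rw [Function.update_of_ne (by omega)]; exact H s h1
  · rintro ⟨w, H⟩ s hs
    have := H s (by omega)
    rwa [Function.update_of_ne (by omega)] at this

lemma pcyl_disj (k t : ℕ) (p : ℕ → ℤ × ℤ) (F : Set Ω) :
    Pairwise (Function.onFun Disjoint
      fun w => F ∩ pcyl W k (t + 1) (Function.update p (t + 1) w)) := by
  intro w w' hne
  simp only [Function.onFun]
  rw [Set.disjoint_left]
  rintro ω ⟨_, h1⟩ ⟨_, h2⟩
  have a := h1 (t + 1) le_rfl
  have b := h2 (t + 1) le_rfl
  simp only [Function.update_self] at a b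
  exact hne (a.symm.trans b)

lemma prob_cyl_pcyl (h : IsIIDCombWalks P W) (k n : ℕ) (path : ℕ → ℕ → ℤ × ℤ) (d : ℕ) :
    ∀ (t : ℕ) (p : ℕ → ℤ × ℤ), t + d = n → P (cyl W k n path ∩ pcyl W k t p) =
      (∏ i ∈ Finset.range k, pp (path i) n) * pp p t := by
  induction d with
  | zero =>
    intro t p ht
    obtain rfl : t = n := by omega
    have := prob_cyl h (k + 1) t (Function.update path k p)
    rw [Finset.prod_range_succ] at this
    simp only [Function.update_self] at this
    have e : ∏ i ∈ Finset.range k, pp (Function.update path k p i) t =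
        ∏ i ∈ Finset.range k, pp (path i) t := by
      apply Finset.prod_congr rfl
      intro i hi
      have := Finset.mem_range.1 hi
      rw [Function.update_of_ne (by omega)]
    rw [e] at this
    rw [← this]
    congr 1
    ext ω
    simp only [cyl, pcyl, Set.mem_inter_iff, Set.mem_ofPred_eq]
    constructor
    · rintro ⟨h1, h2⟩ i hi s hs
      rcases Nat.lt_or_ge i k with hk | hk
      · rw [Function.update_of_ne (by omega)]; exact h1 i hk s hs
      · obtain rfl : i = k := by omega
        simp only [Function.update_self]; exact h2 s hs
    · intro H
      refine ⟨fun i hi s hs => ?_, fun s hs => ?_⟩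
      · have := H i (by omega) s hs
        rwa [Function.update_of_ne (by omega)] at this
      · have := H k (by omega) s hs
        simpa only [Function.update_self] using this
  | succ d ih =>
    intro t p ht
    rw [pcyl_succ, Set.inter_iUnion, measure_iUnion (pcyl_disj k t p _)
      (fun w => (meas_cyl h _ _ _).inter (meas_pcyl h _ _ _))]
    have : ∀ w, P (cyl W k n path ∩ pcyl W k (t + 1) (Function.update p (t + 1) w)) =
      (∏ i ∈ Finset.range k, pp (path i) n) * pp p t * stepProb (p t) w := by
      intro w
      rw [ih (t + 1) _ (by omega), pp_update, mul_assoc]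
    simp only [this]
    rw [ENNReal.tsum_mul_left, tsum_step_one, mul_one]

noncomputable def extPath (k n : ℕ) (q : Fin k → Fin (n + 1) → ℤ × ℤ) : ℕ → ℕ → ℤ × ℤ :=
  fun i s => if h : i < k ∧ s < n + 1 then q ⟨i, h.1⟩ ⟨s, h.2⟩ else 0

lemma mem_cyl_ext (k n : ℕ) (q : Fin k → Fin (n + 1) → ℤ × ℤ) (ω : Ω) :
    ω ∈ cyl W k n (extPath k n q) ↔ (fun (i : Fin k) (s : Fin (n + 1)) => W i s ω) = q := by
  simp only [cyl, Set.mem_ofPred_eq, extPath]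
  constructor
  · intro H
    funext i s
    have := H i i.2 s (by omega)
    simpa [i.2, s.2] using this
  · rintro rfl i hi s hs
    rw [dif_pos ⟨hi, by omega⟩]

lemma univ_cyl (k n : ℕ) : ⋃ q, cyl W k n (extPath k n q) = Set.univ := by
  ext ω
  simp only [Set.mem_iUnion, mem_cyl_ext, Set.mem_univ, iff_true]
  exact ⟨_, rfl⟩

lemma cyl_disj (k n : ℕ) : Pairwise (Function.onFun Disjoint
    fun q => cyl W k n (extPath k n q)) := by
  intro q q' hne
  simp only [Function.onFun]
  rw [Set.disjoint_left]
  intro ω h1 h2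
  rw [mem_cyl_ext] at h1 h2
  exact hne (h1.symm.trans h2)

/-- cylinders of length at least `t` -/
def cylSys (W : ℕ → ℕ → Ω → ℤ × ℤ) (k t : ℕ) : Set (Set Ω) :=
  {C | ∃ n path, t ≤ n ∧ C = cyl W k n path}

lemma cylSys_pi (k t : ℕ) : IsPiSystem (cylSys W k t) := by
  have key : ∀ n path n' path', n ≤ n' → (cyl W k n path ∩ cyl W k n' path').Nonempty →
      cyl W k n path ∩ cyl W k n' path' = cyl W k n' path' := by
    rintro n path n' path' hn ⟨ω₀, h1, h2⟩
    apply Set.inter_eq_right.2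
    intro ω hω i hi s hs
    rw [hω i hi s (by omega), ← h2 i hi s (by omega), h1 i hi s hs]
  rintro _ ⟨n, path, hn, rfl⟩ _ ⟨n', path', hn', rfl⟩ hne
  rcases le_total n n' with hh | hh
  · rw [key _ _ _ _ hh hne]; exact ⟨n', path', hn', rfl⟩
  · rw [Set.inter_comm] at hne ⊢
    rw [key _ _ _ _ hh hne]; exact ⟨n, path, hn, rfl⟩

lemma indep_pcyl (h : IsIIDCombWalks P W) (k t : ℕ) (p : ℕ → ℤ × ℤ) (F : Set Ω)
    (hF : MeasurableSet[MeasurableSpace.generateFrom (cylSys W k t)] F) :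
    P (F ∩ pcyl W k t p) = P F * pp p t := by
  have := h.1
  have hle : MeasurableSpace.generateFrom (cylSys W k t) ≤ ‹MeasurableSpace Ω› := by
    apply MeasurableSpace.generateFrom_le
    rintro _ ⟨n, path, _, rfl⟩
    exact meas_cyl h _ _ _
  have huniv : P (pcyl W k t p) = pp p t := by
    have e1 : P (pcyl W k t p) = ∑' q, P (cyl W k t (extPath k t q) ∩ pcyl W k t p) := by
      rw [← measure_iUnion, ← Set.iUnion_inter, univ_cyl, Set.univ_inter]
      · intro i j hij
        exact (cyl_disj k t hij).mono Set.inter_subset_left Set.inter_subset_left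
      · exact fun i => (meas_cyl h _ _ _).inter (meas_pcyl h _ _ _)
    have e2 : P Set.univ = ∑' q, P (cyl W k t (extPath k t q)) := by
      rw [← measure_iUnion (cyl_disj k t) (fun i => meas_cyl h _ _ _), univ_cyl]
    simp only [prob_cyl_pcyl h k t _ 0 t p rfl, ENNReal.tsum_mul_right] at e1
    simp only [prob_cyl h, measure_univ] at e2
    rw [e1, ← e2, one_mul]
  refine MeasurableSpace.induction_on_inter
    (C := fun F _ => P (F ∩ pcyl W k t p) = P F * pp p t) rfl (cylSys_pi k t)
    ?_ ?_ ?_ ?_ F hF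
  · simp
  · rintro _ ⟨n, path, hn, rfl⟩
    rw [prob_cyl_pcyl h k n path (n - t) t p (by omega), prob_cyl h]
  · intro F hF ih
    have hFm := hle _ hF
    have e : Fᶜ ∩ pcyl W k t p = pcyl W k t p \ (F ∩ pcyl W k t p) := by
      ext ω; simp; tauto
    rw [e, measure_sdiff Set.inter_subset_right
      (hFm.inter (meas_pcyl h _ _ _)).nullMeasurableSet (measure_ne_top _ _), ih, huniv,
      prob_compl_eq_one_sub hFm, ENNReal.sub_mul, one_mul]
    intro _ _
    rw [← huniv]; exact measure_ne_top _ _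
  · intro f hd hf ih
    rw [Set.iUnion_inter, measure_iUnion, measure_iUnion hd (fun i => hle _ (hf i)),
      ← ENNReal.tsum_mul_right]
    · exact tsum_congr ih
    · intro i j hij
      exact (hd hij).mono Set.inter_subset_left Set.inter_subset_left
    · exact fun i => (hle _ (hf i)).inter (meas_pcyl h _ _ _)

lemma meas_W_cylSys (k t i s : ℕ) (hi : i < k) :
    Measurable[MeasurableSpace.generateFrom (cylSys W k t)] (W i s) := by
  let _ := MeasurableSpace.generateFrom (cylSys W k t)
  apply measurable_to_countable'
  intro v
  have e : W i s ⁻¹' {v} = ⋃ q, ⋃ (_ : extPath k (max s t) q i s = v),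
      cyl W k (max s t) (extPath k (max s t) q) := by
    ext ω
    simp only [Set.mem_preimage, Set.mem_singleton_iff, Set.mem_iUnion, exists_prop]
    constructor
    · intro hv
      have hm := (mem_cyl_ext (W := W) k (max s t) _ ω).2 rfl
      refine ⟨_, ?_, hm⟩
      rw [← hm i hi s (by omega), hv]
    · rintro ⟨q, hq, hm⟩
      rw [hm i hi s (by omega), hq]
  rw [e]
  exact MeasurableSet.iUnion fun q => MeasurableSet.iUnion fun _ =>
    MeasurableSpace.measurableSet_generateFrom ⟨_, _, le_max_right _ _, rfl⟩

end

/-! stopped walks -/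

open Classical in
noncomputable def stopW (B : Set (ℤ × ℤ)) (traj : ℕ → ℤ × ℤ) : ℕ → ℤ × ℤ
  | 0 => traj 0
  | t + 1 => if ∀ s ≤ t, traj s ∈ B then traj (t + 1) else stopW B traj t

lemma stopW_alive (B : Set (ℤ × ℤ)) (traj : ℕ → ℤ × ℤ) (t : ℕ) (h : ∀ s ≤ t, traj s ∈ B) :
    stopW B traj t = traj t := by
  cases t with
  | zero => rfl
  | succ t => rw [stopW, if_pos (fun s hs => h s (by omega))]

lemma stopW_settle (B : Set (ℤ × ℤ)) (traj : ℕ → ℤ × ℤ) (hex : ∃ n, traj n ∉ B) (t : ℕ)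
    (ht : sInf {n | traj n ∉ B} ≤ t) : stopW B traj t = settlePoint B traj := by
  have hmem : traj (sInf {n | traj n ∉ B}) ∉ B := Nat.sInf_mem (s := {n | traj n ∉ B}) hex
  have hlt : ∀ m < sInf {n | traj n ∉ B}, traj m ∈ B := by
    intro m hm
    by_contra hc
    exact Nat.notMem_of_lt_sInf hm hc
  unfold settlePoint
  generalize sInf {n | traj n ∉ B} = τ at *
  induction t with
  | zero =>
    obtain rfl : τ = 0 := by omega
    rfl
  | succ t ih =>
    rw [stopW]
    split_ifs with hc
    · have : ¬ τ ≤ t := fun h => hmem (hc τ h)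
      congr 1; omega
    · apply ih
      by_contra hlt2
      exact hc (fun s hs => hlt s (by omega))

section
variable {Ω : Type*} [m0 : MeasurableSpace Ω]

structure WalkM (ν : Measure Ω) (S : ℕ → Ω → ℤ × ℤ) : Prop where
  fin : IsFiniteMeasure ν
  meas : ∀ t, Measurable (S t)
  zero : ∀ᵐ ω ∂ν, S 0 ω = (0, 0)
  step : ∀ (t : ℕ) (p : ℕ → ℤ × ℤ) (w : ℤ × ℤ),
    ν {ω | ∀ s ≤ t + 1, S s ω = Function.update p (t + 1) w s} =
      ν {ω | ∀ s ≤ t, S s ω = p s} * stepProb (p t) w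

variable {ν : Measure Ω} {S : ℕ → Ω → ℤ × ℤ}

lemma WalkM.markov (h : WalkM ν S) (t : ℕ) (φ : (Fin (t + 1) → ℤ × ℤ) → ℝ≥0∞)
    (f : ℤ × ℤ → ℝ≥0∞) :
    ∫⁻ ω, φ (fun s => S s ω) * f (S (t + 1) ω) ∂ν =
      ∫⁻ ω, φ (fun s => S s ω) * Qop f (S t ω) ∂ν := by
  let X : Ω → (Fin (t + 1) → ℤ × ℤ) := fun ω s => S s ω
  have hX : Measurable X := measurable_pi_lambda _ fun s => h.meas s
  have hXS : Measurable fun ω => (X ω, S (t + 1) ω) := hX.prodMk (h.meas _)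
  have e1 : ∫⁻ ω, φ (X ω) * f (S (t + 1) ω) ∂ν =
      ∫⁻ z : (Fin (t + 1) → ℤ × ℤ) × (ℤ × ℤ), φ z.1 * f z.2
        ∂(ν.map fun ω => (X ω, S (t + 1) ω)) := by
    rw [lintegral_map (measurable_of_countable _) hXS]
  have e2 : ∫⁻ ω, φ (X ω) * Qop f (S t ω) ∂ν =
      ∫⁻ q : Fin (t + 1) → ℤ × ℤ, φ q * Qop f (q (Fin.last t)) ∂(ν.map X) := by
    rw [lintegral_map (measurable_of_countable _) hX]
    rfl
  change ∫⁻ ω, φ (X ω) * f (S (t + 1) ω) ∂ν = ∫⁻ ω, φ (X ω) * Qop f (S t ω) ∂ν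
  rw [e1, e2, lintegral_countable', lintegral_countable', ENNReal.tsum_prod'
    (f := fun a : (Fin (t + 1) → ℤ × ℤ) × (ℤ × ℤ) => φ a.1 * f a.2 *
      (ν.map fun ω => (X ω, S (t + 1) ω)) {a})]
  apply tsum_congr
  intro q
  rw [← tsum_step, mul_assoc, ← ENNReal.tsum_mul_right, ← ENNReal.tsum_mul_left]
  apply tsum_congr
  intro w
  rw [Measure.map_apply hXS (measurableSet_singleton _),
    Measure.map_apply hX (measurableSet_singleton _)]
  have hs := h.step t (fun s => if hs : s < t + 1 then q ⟨s, hs⟩ else 0) w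
  have a1 : (fun ω => (X ω, S (t + 1) ω)) ⁻¹' {(q, w)} = {ω | ∀ s ≤ t + 1, S s ω =
      Function.update (fun s => if hs : s < t + 1 then q ⟨s, hs⟩ else 0) (t + 1) w s} := by
    ext ω
    simp only [Set.mem_preimage, Set.mem_singleton_iff, Prod.mk.injEq, Set.mem_ofPred_eq]
    constructor
    · rintro ⟨rfl, rfl⟩ s hs
      rcases Nat.lt_or_ge t s with h1 | h1
      · obtain rfl : s = t + 1 := by omega
        simp
      · rw [Function.update_of_ne (by omega), dif_pos (by omega)]
    · intro H
      constructor
      · funext s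
        have := H s (by omega)
        rw [Function.update_of_ne (by omega), dif_pos s.2] at this
        exact this
      · have := H (t + 1) le_rfl
        simpa using this
  have a2 : X ⁻¹' {q} = {ω | ∀ s ≤ t, S s ω =
      (fun s => if hs : s < t + 1 then q ⟨s, hs⟩ else 0) s} := by
    ext ω
    simp only [Set.mem_preimage, Set.mem_singleton_iff, Set.mem_ofPred_eq]
    constructor
    · rintro rfl s hs
      rw [dif_pos (by omega)]
    · intro H
      funext s
      have := H s (by omega)
      rw [dif_pos s.2] at this
      exact this
  rw [a1, a2, hs]
  have : (fun s => if hs : s < t + 1 then q ⟨s, hs⟩ else 0) t = q (Fin.last t) := by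
    simp [Fin.last]
  simp only at this ⊢
  rw [this]
  ring

def alive (S : ℕ → Ω → ℤ × ℤ) (B : Set (ℤ × ℤ)) (t : ℕ) : Set Ω := {ω | ∀ s ≤ t, S s ω ∈ B}

lemma meas_alive {m : MeasurableSpace Ω} (hS : ∀ t, Measurable[m] (S t)) (B : Set (ℤ × ℤ)) (t : ℕ) :
    MeasurableSet[m] (alive S B t) := by
  have : alive S B t = ⋂ s, ⋂ (_ : s ≤ t), S s ⁻¹' B := by
    ext ω; simp [alive]
  rw [this]
  exact MeasurableSet.iInter fun s => MeasurableSet.iInter fun _ =>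
    hS s (Set.to_countable B).measurableSet

lemma meas_stopW (hS : ∀ t, Measurable (S t)) (B : Set (ℤ × ℤ)) (t : ℕ) :
    Measurable fun ω => stopW B (fun s => S s ω) t := by
  induction t with
  | zero => exact hS 0
  | succ t ih =>
    simp only [stopW]
    exact Measurable.ite (meas_alive hS B t) (hS _) ih

lemma WalkM.superstep (h : WalkM ν S) (B : Set (ℤ × ℤ)) (f : ℤ × ℤ → ℝ≥0∞) (ε : ℝ≥0∞)
    (hf : ∀ v ∈ B, Qop f v + ε ≤ f v) (t : ℕ) :
    ∫⁻ ω, f (stopW B (fun s => S s ω) (t + 1)) ∂ν + ε * ν (alive S B t) ≤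
      ∫⁻ ω, f (stopW B (fun s => S s ω) t) ∂ν := by
  classical
  have hm := meas_alive h.meas B t
  have hiff : ∀ ω, ω ∈ alive S B t ↔ ∀ s ≤ t, S s ω ∈ B := fun ω => Iff.rfl
  have hmf : ∀ g : ℤ × ℤ → ℝ≥0∞, Measurable g := fun g => measurable_of_countable g
  rw [← lintegral_add_compl _ hm, ← lintegral_add_compl (fun ω => f (stopW B _ t)) hm]
  have e1 : ∫⁻ ω in alive S B t, f (stopW B (fun s => S s ω) (t + 1)) ∂ν =
      ∫⁻ ω in alive S B t, Qop f (S t ω) ∂ν := by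
    have := h.markov t (fun q => if ∀ s, q s ∈ B then 1 else 0) f
    have key : ∀ g : Ω → ℝ≥0∞, ∫⁻ ω, (if ∀ s : Fin (t + 1), S s ω ∈ B then 1 else 0) * g ω ∂ν =
        ∫⁻ ω in alive S B t, g ω ∂ν := by
      intro g
      rw [← lintegral_indicator hm]
      apply lintegral_congr
      intro ω
      by_cases hω : ω ∈ alive S B t
      · rw [Set.indicator_of_mem hω, if_pos (fun s : Fin (t + 1) => hω s (by omega)), one_mul]
      · rw [Set.indicator_of_notMem hω, if_neg, zero_mul]
        intro H
        exact hω (fun s hs => H ⟨s, by omega⟩)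
    rw [key, key] at this
    rw [← this]
    apply setLIntegral_congr_fun hm
    intro ω hω
    simp only [stopW]
    rw [if_pos ((hiff ω).1 hω)]
  have e2 : ∫⁻ ω in (alive S B t)ᶜ, f (stopW B (fun s => S s ω) (t + 1)) ∂ν =
      ∫⁻ ω in (alive S B t)ᶜ, f (stopW B (fun s => S s ω) t) ∂ν := by
    apply setLIntegral_congr_fun hm.compl
    intro ω hω
    simp only [stopW]
    rw [if_neg (fun hh => hω ((hiff ω).2 hh))]
  rw [e1, e2, add_right_comm]
  gcongr
  rw [← setLIntegral_const, ← lintegral_add_right _ measurable_const]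
  apply setLIntegral_mono ((hmf f).comp (meas_stopW h.meas B t))
  intro ω hω
  simp only [Function.comp]
  rw [stopW_alive B _ t hω]
  exact hf _ (hω t le_rfl)

lemma WalkM.int_zero (h : WalkM ν S) (B : Set (ℤ × ℤ)) (f : ℤ × ℤ → ℝ≥0∞) :
    ∫⁻ ω, f (stopW B (fun s => S s ω) 0) ∂ν = f (0, 0) * ν Set.univ := by
  rw [← lintegral_const]
  apply lintegral_congr_ae
  filter_upwards [h.zero] with ω hω
  simp only [stopW]; rw [hω]

lemma WalkM.super (h : WalkM ν S) (B : Set (ℤ × ℤ)) (f : ℤ × ℤ → ℝ≥0∞) (ε : ℝ≥0∞)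
    (hf : ∀ v ∈ B, Qop f v + ε ≤ f v) (t : ℕ) :
    ∫⁻ ω, f (stopW B (fun s => S s ω) t) ∂ν + ε * ∑ s ∈ Finset.range t, ν (alive S B s) ≤
      f (0, 0) * ν Set.univ := by
  induction t with
  | zero => rw [h.int_zero]; simp
  | succ t ih =>
    refine le_trans ?_ ih
    rw [Finset.sum_range_succ, mul_add, add_comm (ε * _), ← add_assoc]
    gcongr
    exact h.superstep B f ε hf t

lemma WalkM.exit (h : WalkM ν S) (B : Finset (ℤ × ℤ)) : ∀ᵐ ω ∂ν, ∃ n, S n ω ∉ (B : Set (ℤ × ℤ)) := by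
  have := h.fin
  obtain ⟨K, hK⟩ : ∃ K : ℝ, ∀ v ∈ B, ((|v.2| : ℤ) + 1 : ℝ) ^ 2 ≤ K := by
    obtain ⟨K, hK⟩ := (B.image fun v => ((|v.2| : ℤ) + 1 : ℝ) ^ 2).bddAbove
    exact ⟨K, fun v hv => hK (Finset.mem_coe.2 (Finset.mem_image_of_mem _ hv))⟩
  have hf : ∀ v ∈ (B : Set (ℤ × ℤ)), Qop (fun v => ENNReal.ofReal (K - (v.2 : ℝ) ^ 2)) v
      + ENNReal.ofReal (1 / 2) ≤ ENNReal.ofReal (K - (v.2 : ℝ) ^ 2) := by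
    rintro ⟨x, y⟩ hv
    have hk := hK _ hv
    simp only at hk
    have h4 : (4 : ℝ≥0∞) = ENNReal.ofReal 4 := by simp
    have h2 : (2 : ℝ≥0∞) = ENNReal.ofReal 2 := by simp
    unfold Qop
    by_cases hy : y = 0
    · subst hy
      simp only [abs_zero, Int.cast_zero, zero_add, one_pow] at hk
      simp only [if_true]
      rw [← ENNReal.ofReal_add, ← ENNReal.ofReal_add, ← ENNReal.ofReal_add, h4,
        ← ENNReal.ofReal_div_of_pos, ← ENNReal.ofReal_add]
      · apply ENNReal.ofReal_le_ofReal
        push_cast; linarith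
      all_goals try norm_num
      all_goals linarith
    · simp only [hy, if_false]
      push_cast at hk ⊢
      have b1 : ((y : ℝ) + 1) ^ 2 ≤ K := by
        refine le_trans (sq_le_sq' ?_ ?_) hk <;>
        · have := neg_abs_le (y : ℝ); have := le_abs_self (y : ℝ); linarith
      have b2 : ((y : ℝ) - 1) ^ 2 ≤ K := by
        refine le_trans (sq_le_sq' ?_ ?_) hk <;>
        · have := neg_abs_le (y : ℝ); have := le_abs_self (y : ℝ); linarith
      rw [← ENNReal.ofReal_add (by linarith) (by linarith), h2,
        ← ENNReal.ofReal_div_of_pos (by norm_num), ← ENNReal.ofReal_add (by linarith) (by norm_num)]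
      apply ENNReal.ofReal_le_ofReal
      nlinarith
  have hs := h.super B _ _ hf
  have hz : ν {ω | ∀ n, S n ω ∈ (B : Set (ℤ × ℤ))} = 0 := by
    by_contra hne
    have hlt : ENNReal.ofReal (K - (((0, 0) : ℤ × ℤ).2 : ℝ) ^ 2) * ν Set.univ < ⊤ :=
      ENNReal.mul_lt_top ENNReal.ofReal_lt_top (measure_lt_top _ _)
    set c := ν {ω | ∀ n, S n ω ∈ (B : Set (ℤ × ℤ))} with hc
    have hle : ∀ n : ℕ, (n : ℝ≥0∞) * (ENNReal.ofReal (1 / 2) * c) ≤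
        ENNReal.ofReal (K - (((0, 0) : ℤ × ℤ).2 : ℝ) ^ 2) * ν Set.univ := by
      intro n
      refine le_trans ?_ (hs n)
      refine le_trans ?_ le_add_self
      have : (n : ℝ≥0∞) * c ≤ ∑ s ∈ Finset.range n, ν (alive S B s) := by
        rw [← nsmul_eq_mul]
        have := Finset.card_nsmul_le_sum (Finset.range n) (fun s => ν (alive S B s)) c
          (fun s _ => measure_mono (fun ω hω s _ => hω s))
        simpa using this
      calc _ = ENNReal.ofReal (1 / 2) * (n * c) := by ring
        _ ≤ _ := by gcongr
    have hpos : ENNReal.ofReal (1 / 2) * c ≠ 0 := by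
      simp [hne]
    obtain ⟨n, hn⟩ := ENNReal.exists_nat_mul_gt hpos hlt.ne
    exact absurd (hle n) (not_le.2 hn)
  rw [ae_iff]
  convert hz using 3
  simp

lemma WalkM.settle_le (h : WalkM ν S) (B : Finset (ℤ × ℤ)) (f : ℤ × ℤ → ℝ≥0∞)
    (hf : ∀ v ∈ B, Qop f v ≤ f v) :
    ∫⁻ ω, f (settlePoint B (fun s => S s ω)) ∂ν ≤ f (0, 0) * ν Set.univ := by
  have hs := fun t => h.super B f 0 (fun v hv => by simpa using hf v hv) t
  simp only [zero_mul, add_zero] at hs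
  calc ∫⁻ ω, f (settlePoint B (fun s => S s ω)) ∂ν
      ≤ ∫⁻ ω, Filter.liminf (fun t => f (stopW B (fun s => S s ω) t)) Filter.atTop ∂ν := by
        apply lintegral_mono_ae
        filter_upwards [h.exit B] with ω hω
        apply le_of_eq
        symm
        apply Filter.Tendsto.liminf_eq
        apply tendsto_const_nhds.congr'
        filter_upwards [Filter.eventually_ge_atTop (sInf {n | S n ω ∉ (B : Set (ℤ × ℤ))})] with t ht
        rw [stopW_settle _ _ hω t ht]
    _ ≤ Filter.liminf (fun t => ∫⁻ ω, f (stopW B (fun s => S s ω) t) ∂ν) Filter.atTop :=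
        lintegral_liminf_le fun t => (measurable_of_countable f).comp (meas_stopW h.meas B t)
    _ ≤ f (0, 0) * ν Set.univ := by
        refine le_trans (Filter.liminf_le_liminf (Filter.Eventually.of_forall hs)) ?_
        simp

lemma meas_settle {m : MeasurableSpace Ω} (hS : ∀ t, Measurable[m] (S t)) (B : Set (ℤ × ℤ)) :
    Measurable[m] fun ω => settlePoint B (fun s => S s ω) := by
  have hB : ∀ n, MeasurableSet[m] {ω | S n ω ∈ B} := fun n =>
    hS n (Set.to_countable B).measurableSet
  apply measurable_to_countable'
  intro v
  have e : (fun ω => settlePoint B (fun s => S s ω)) ⁻¹' {v} =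
      ⋃ n : ℕ, ({ω | S n ω ∈ B}ᶜ ∩ (⋂ k, ⋂ (_ : k < n), {ω | S k ω ∈ B}) ∪
        (⋂ k, {ω | n = 0 ∧ S k ω ∈ B})) ∩ S n ⁻¹' {v} := by
    ext ω
    simp only [settlePoint, Set.mem_preimage, Set.mem_singleton_iff, Set.mem_iUnion,
      Set.mem_inter_iff, Set.mem_union, Set.mem_compl_iff, Set.mem_ofPred_eq, Set.mem_iInter]
    constructor
    · intro hv
      refine ⟨sInf {n | S n ω ∉ B}, ?_, hv⟩
      by_cases hex : ∃ n, S n ω ∉ B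
      · left
        refine ⟨Nat.sInf_mem (s := {n | S n ω ∉ B}) hex, fun k hk => ?_⟩
        by_contra hc
        exact Nat.notMem_of_lt_sInf hk hc
      · right
        push Not at hex
        intro k
        refine ⟨?_, hex k⟩
        simp [hex]
    · rintro ⟨n, hn, hv⟩
      rw [← hv]
      congr 1
      rcases hn with ⟨h1, h2⟩ | h3
      · apply le_antisymm
        · exact Nat.sInf_le h1
        · by_contra hc
          push Not at hc
          have : S (sInf {n | S n ω ∉ B}) ω ∉ B := Nat.sInf_mem (s := {n | S n ω ∉ B}) ⟨n, h1⟩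
          exact this (h2 _ hc)
      · rw [(h3 0).1]
        simp [fun k => (h3 k).2]
  rw [e]
  refine MeasurableSet.iUnion fun n => MeasurableSet.inter (MeasurableSet.union
    (MeasurableSet.inter (hB n).compl (MeasurableSet.iInter fun k => MeasurableSet.iInter fun _ => hB k))
    (MeasurableSet.iInter fun k => ?_)) (hS n (measurableSet_singleton _))
  by_cases hn : n = 0
  · simp only [hn, true_and]; exact hB k
  · simp [hn]

end

noncomputable def lap (h : ℤ × ℤ → ℝ) (w : ℤ × ℤ) : ℝ :=
  h (w.1, w.2 + 1) + h (w.1, w.2 - 1) - 2 * h w +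
    if w.2 = 0 then h (w.1 + 1, w.2) + h (w.1 - 1, w.2) - 2 * h w else 0

lemma Qop_le_of_lap (h : ℤ × ℤ → ℝ) (h1 : ∀ w, h w ≤ 1) (w : ℤ × ℤ) (hl : 0 ≤ lap h w) :
    Qop (fun v => ENNReal.ofReal (1 - h v)) w ≤ ENNReal.ofReal (1 - h w) := by
  obtain ⟨x, y⟩ := w
  have h4 : (4 : ℝ≥0∞) = ENNReal.ofReal 4 := by simp
  have h2 : (2 : ℝ≥0∞) = ENNReal.ofReal 2 := by simp
  have hn : ∀ w, 0 ≤ 1 - h w := fun w => by linarith [h1 w]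
  unfold Qop
  unfold lap at hl
  by_cases hy : y = 0
  · subst hy
    simp only [if_true, zero_add, zero_sub] at hl ⊢
    rw [← ENNReal.ofReal_add (hn _) (hn _), ← ENNReal.ofReal_add (by linarith [hn (x + 1, 0), hn (x - 1, 0)]) (hn _),
      ← ENNReal.ofReal_add (by linarith [hn (x + 1, 0), hn (x - 1, 0), hn (x, 1)]) (hn _), h4,
      ← ENNReal.ofReal_div_of_pos (by norm_num)]
    apply ENNReal.ofReal_le_ofReal
    linarith
  · simp only [hy, if_false] at hl ⊢
    rw [← ENNReal.ofReal_add (hn _) (hn _), h2, ← ENNReal.ofReal_div_of_pos (by norm_num)]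
    apply ENNReal.ofReal_le_ofReal
    linarith

noncomputable def clF (W : ℕ → ℕ → ℤ × ℤ) : ℕ → Finset (ℤ × ℤ)
  | 0 => ∅
  | k + 1 => insert (settlePoint (clF W k) (W k)) (clF W k)

lemma clF_coe (W : ℕ → ℕ → ℤ × ℤ) (k : ℕ) : (clF W k : Set (ℤ × ℤ)) = dlaCluster W k := by
  induction k with
  | zero => simp [clF, dlaCluster]
  | succ k ih =>
    rw [clF, dlaCluster, Finset.coe_insert, ih, Set.union_singleton]

section
variable {Ω : Type*} [m0 : MeasurableSpace Ω] {P : Measure Ω} {W : ℕ → ℕ → Ω → ℤ × ℤ}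

lemma meas_clF {m : MeasurableSpace Ω} (k : ℕ) (hW : ∀ i < k, ∀ t, Measurable[m] (W i t))
    (B : Finset (ℤ × ℤ)) : MeasurableSet[m] {ω | clF (fun i t => W i t ω) k = B} := by
  induction k generalizing B with
  | zero => simp [clF]
  | succ k ih =>
    have e : {ω | clF (fun i t => W i t ω) (k + 1) = B} =
        ⋃ B' : Finset (ℤ × ℤ), {ω | clF (fun i t => W i t ω) k = B'} ∩
          (fun ω => settlePoint B' (fun s => W k s ω)) ⁻¹' {v | insert v B' = B} := by
      ext ω
      simp only [clF, Set.mem_ofPred_eq, Set.mem_iUnion, Set.mem_inter_iff, Set.mem_preimage]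
      simp
    rw [e]
    exact MeasurableSet.iUnion fun B' => MeasurableSet.inter
      (ih (fun i hi t => hW i (by omega) t) B')
      (meas_settle (fun t => hW k (by omega) t) _ (Set.to_countable _).measurableSet)

lemma walkM_restrict (h : IsIIDCombWalks P W) (k : ℕ) (B : Finset (ℤ × ℤ)) :
    WalkM (P.restrict {ω | clF (fun i t => W i t ω) k = B}) (W k) := by
  have := h.1
  have hF : ∀ t, MeasurableSet[MeasurableSpace.generateFrom (cylSys W k t)]
      {ω | clF (fun i t => W i t ω) k = B} :=
    fun t => meas_clF k (fun i hi s => meas_W_cylSys k t i s hi) B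
  have key : ∀ t p, P.restrict {ω | clF (fun i t => W i t ω) k = B} (pcyl W k t p) =
      P {ω | clF (fun i t => W i t ω) k = B} * pp p t := by
    intro t p
    rw [Measure.restrict_apply (meas_pcyl h k t p), Set.inter_comm]
    exact indep_pcyl h k t p _ (hF t)
  refine ⟨inferInstance, fun t => h.2.1 k t, ?_, ?_⟩
  · rw [ae_iff]
    have e : {ω | ¬ W k 0 ω = (0, 0)} = ⋃ v : ℤ × ℤ, ⋃ (_ : v ≠ (0, 0)), pcyl W k 0 (fun _ => v) := by
      ext ω
      simp [pcyl]
    rw [e]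
    refine measure_iUnion_null fun v => measure_iUnion_null fun hv => ?_
    rw [key]
    simp [pp, hv]
  · intro t p w
    have a := key (t + 1) (Function.update p (t + 1) w)
    have b := key t p
    rw [pp_update] at a
    unfold pcyl at a b
    rw [a, b, mul_assoc]

open Classical in
lemma main_step (h : IsIIDCombWalks P W) (z : ℤ × ℤ) (g : ℤ × ℤ → ℝ≥0∞)
    (hg : ∀ v ≠ z, Qop g v ≤ g v) (k : ℕ) :
    ∫⁻ ω, (if z ∈ clF (fun i t => W i t ω) (k + 1) then 0
      else ∏ y ∈ clF (fun i t => W i t ω) (k + 1), g y) ∂P ≤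
    g (0, 0) * ∫⁻ ω, (if z ∈ clF (fun i t => W i t ω) k then 0
      else ∏ y ∈ clF (fun i t => W i t ω) k, g y) ∂P := by
  let F : Finset (ℤ × ℤ) → Set Ω := fun B => {ω | clF (fun i t => W i t ω) k = B}
  have hFm : ∀ B, MeasurableSet (F B) := fun B => meas_clF k (fun i _ t => h.2.1 i t) B
  have hd : Pairwise (Function.onFun Disjoint F) := by
    intro B B' hne
    simp only [Function.onFun]
    rw [Set.disjoint_left]
    intro ω h1 h2
    exact hne (Eq.trans (Eq.symm h1) h2)
  have hU : ⋃ B, F B = Set.univ := by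
    ext ω; simp [F]
  rw [← setLIntegral_univ, ← setLIntegral_univ
    (fun ω => if z ∈ clF (fun i t => W i t ω) k then 0
      else ∏ y ∈ clF (fun i t => W i t ω) k, g y), ← hU,
    lintegral_iUnion hFm hd, lintegral_iUnion hFm hd, ← ENNReal.tsum_mul_left]
  apply ENNReal.tsum_le_tsum
  intro B
  have hw := walkM_restrict h k B
  by_cases hz : z ∈ B
  · apply le_of_eq_of_le _ zero_le
    rw [← lintegral_zero (μ := P.restrict (F B))]
    apply setLIntegral_congr_fun (hFm B)
    intro ω hω
    have hω' : clF (fun i t => W i t ω) k = B := hω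
    simp only [clF, hω']
    rw [if_pos (Finset.mem_insert_of_mem hz)]
    simp
  · have e : ∫⁻ ω in F B, (if z ∈ clF (fun i t => W i t ω) k then 0
        else ∏ y ∈ clF (fun i t => W i t ω) k, g y) ∂P = (∏ y ∈ B, g y) * P (F B) := by
      rw [← setLIntegral_const]
      apply setLIntegral_congr_fun (hFm B)
      intro ω hω
      have hω' : clF (fun i t => W i t ω) k = B := hω
      simp only [hω', hz, if_false]
    rw [e]
    calc ∫⁻ ω in F B, (if z ∈ clF (fun i t => W i t ω) (k + 1) then 0
        else ∏ y ∈ clF (fun i t => W i t ω) (k + 1), g y) ∂P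
        ≤ ∫⁻ ω in F B, (∏ y ∈ B, g y) * g (settlePoint B (fun s => W k s ω)) ∂P := by
          apply lintegral_mono_ae
          have hin : ∀ᵐ ω ∂(P.restrict (F B)), ω ∈ F B := ae_restrict_mem (hFm B)
          filter_upwards [hw.exit B, hin] with ω hex hω
          have hω' : clF (fun i t => W i t ω) k = B := hω
          simp only [clF, hω']
          have hnot : settlePoint B (fun s => W k s ω) ∉ B := by
            have := Nat.sInf_mem (s := {n | W k n ω ∉ (B : Set (ℤ × ℤ))}) hex
            exact this
          split_ifs
          · exact zero_le
          · rw [Finset.prod_insert hnot, mul_comm]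
      _ = (∏ y ∈ B, g y) * ∫⁻ ω in F B, g (settlePoint B (fun s => W k s ω)) ∂P := by
          rw [lintegral_const_mul]
          exact (measurable_of_countable g).comp (meas_settle (h.2.1 k) _)
      _ ≤ (∏ y ∈ B, g y) * (g (0, 0) * P (F B)) := by
          gcongr
          have := hw.settle_le B g (fun v hv => hg v (fun hvz => hz (hvz ▸ hv)))
          simpa using this
      _ = _ := by ring

open Classical in
lemma main_iter (h : IsIIDCombWalks P W) (z : ℤ × ℤ) (g : ℤ × ℤ → ℝ≥0∞)
    (hg : ∀ v ≠ z, Qop g v ≤ g v) (k : ℕ) :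
    ∫⁻ ω, (if z ∈ clF (fun i t => W i t ω) k then 0
      else ∏ y ∈ clF (fun i t => W i t ω) k, g y) ∂P ≤ g (0, 0) ^ k := by
  have := h.1
  induction k with
  | zero => simp [clF]
  | succ k ih =>
    refine (main_step h z g hg k).trans ?_
    rw [pow_succ, mul_comm]
    gcongr

lemma one_sub_ge_exp (x : ℝ) (h0 : 0 ≤ x) (h1 : x ≤ 1 / 2) : Real.exp (-(x + x ^ 2)) ≤ 1 - x := by
  have hq := Real.quadratic_le_exp_of_nonneg (x := x + x ^ 2) (by positivity)
  rw [Real.exp_neg, inv_le_comm₀ (Real.exp_pos _) (by linarith)]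
  refine le_trans ?_ hq
  rw [inv_eq_one_div, div_le_iff₀ (by linarith)]
  have h3 : x ^ 2 ≤ 1 / 4 := by nlinarith
  have h4 : x ^ 3 ≤ 1 / 8 := by nlinarith [sq_nonneg x]
  have h5 : 0 ≤ x ^ 2 * (1 - x - x ^ 2 - x ^ 3) := by
    apply mul_nonneg (sq_nonneg x); linarith
  nlinarith

lemma prob_bound (hI : IsIIDCombWalks P W) (z : ℤ × ℤ) (h : ℤ × ℤ → ℝ) (E : Finset (ℤ × ℤ))
    (h0 : ∀ w, 0 ≤ h w) (h1 : ∀ w, h w ≤ 1 / 2) (hE : ∀ w ∉ E, h w = 0)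
    (hsub : ∀ w ≠ z, 0 ≤ lap h w) (d : ℕ) :
    P {ω | z ∉ dlaCluster (fun i t => W i t ω) d} ≤
      ENNReal.ofReal (Real.exp (-(d * h (0, 0) - ∑ w ∈ E, h w - ∑ w ∈ E, h w ^ 2))) := by
  classical
  let g : ℤ × ℤ → ℝ≥0∞ := fun v => ENNReal.ofReal (1 - h v)
  have hg : ∀ v ≠ z, Qop g v ≤ g v := fun v hv =>
    Qop_le_of_lap h (fun w => by linarith [h1 w]) v (hsub v hv)
  have hit := main_iter hI z g hg d
  have hg1 : ∀ v, g v ≤ 1 := fun v => by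
    simp only [g]; rw [ENNReal.ofReal_le_one]; linarith [h0 v]
  have hlow : ∀ B : Finset (ℤ × ℤ), ∏ y ∈ E, g y ≤ ∏ y ∈ B, g y := by
    intro B
    calc ∏ y ∈ E, g y = ∏ y ∈ E ∪ B, g y := by
          apply Finset.prod_subset Finset.subset_union_left
          intro v _ hv
          simp [g, hE v hv]
      _ ≤ ∏ y ∈ B, g y := by
          apply Finset.prod_le_prod_of_subset_of_le_one' Finset.subset_union_right
          intro v _ _; exact hg1 v
  let D : ℝ := Real.exp (-(∑ w ∈ E, h w + ∑ w ∈ E, h w ^ 2))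
  have hD : ENNReal.ofReal D ≤ ∏ y ∈ E, g y := by
    simp only [g, D]
    rw [← ENNReal.ofReal_prod_of_nonneg (fun i _ => by linarith [h1 i])]
    apply ENNReal.ofReal_le_ofReal
    rw [← Finset.sum_add_distrib, ← Finset.sum_neg_distrib, Real.exp_sum]
    apply Finset.prod_le_prod
    · intro i _; positivity
    · intro i _; exact one_sub_ge_exp _ (h0 i) (h1 i)
  have hm : MeasurableSet {ω | z ∉ dlaCluster (fun i t => W i t ω) d} := by
    have e : {ω | z ∉ dlaCluster (fun i t => W i t ω) d} =
        ⋃ B : Finset (ℤ × ℤ), ⋃ (_ : z ∉ B), {ω | clF (fun i t => W i t ω) d = B} := by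
      ext ω
      simp [← clF_coe]
    rw [e]
    exact MeasurableSet.iUnion fun B => MeasurableSet.iUnion fun _ =>
      meas_clF d (fun i _ t => hI.2.1 i t) B
  have hlb : ENNReal.ofReal D * P {ω | z ∉ dlaCluster (fun i t => W i t ω) d} ≤ g (0, 0) ^ d := by
    refine le_trans ?_ hit
    rw [← setLIntegral_const, ← lintegral_indicator hm]
    apply lintegral_mono
    intro ω
    simp only [Set.indicator, ← clF_coe, Set.mem_ofPred_eq, Finset.mem_coe]
    split_ifs with hz
    · first | exact hD.trans (hlow _) | exact (zero_le : (0:ℝ≥0∞) ≤ _) | simp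
    · first | exact hD.trans (hlow _) | exact (zero_le : (0:ℝ≥0∞) ≤ _) | simp
  have hup : g (0, 0) ^ d ≤ ENNReal.ofReal (Real.exp (-(d * h (0, 0)))) := by
    simp only [g]
    rw [← ENNReal.ofReal_pow (by linarith [h1 (0, 0)])]
    apply ENNReal.ofReal_le_ofReal
    rw [← mul_neg, Real.exp_nat_mul]
    apply pow_le_pow_left₀ (by linarith [h1 (0, 0)])
    have := Real.add_one_le_exp (-h (0, 0)); linarith
  have hDpos : 0 < D := Real.exp_pos _
  calc P {ω | z ∉ dlaCluster (fun i t => W i t ω) d}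
      = ENNReal.ofReal D⁻¹ * (ENNReal.ofReal D * P {ω | z ∉ dlaCluster (fun i t => W i t ω) d}) := by
        rw [← mul_assoc, ← ENNReal.ofReal_mul (by positivity), inv_mul_cancel₀ hDpos.ne']
        simp
    _ ≤ ENNReal.ofReal D⁻¹ * ENNReal.ofReal (Real.exp (-(d * h (0, 0)))) := by
        gcongr; exact hlb.trans hup
    _ = _ := by
        rw [← ENNReal.ofReal_mul (by positivity)]
        congr 1
        simp only [D]
        rw [← Real.exp_neg, ← Real.exp_add]
        congr 1; ring

end

lemma sbp_shift (e : (ℤ × ℤ) ≃ (ℤ × ℤ)) (H V : ℤ × ℤ → ℝ) (c : ℤ × ℤ → ℝ) (hc : ∀ w, c (e w) = c w) :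
    ∑' w, c w * H w * V (e w) = ∑' w, c w * H (e.symm w) * V w := by
  rw [← e.tsum_eq (fun w => c w * H (e.symm w) * V w)]
  simp [hc]

lemma summ_fin (E : Finset (ℤ × ℤ)) (f H : ℤ × ℤ → ℝ) (e : (ℤ × ℤ) ≃ (ℤ × ℤ)) (hE : ∀ w ∉ E, H w = 0)
    (hf : ∀ w, H (e w) = 0 → f w = 0) : Summable f := by
  classical
  apply summable_of_ne_finset_zero (s := E.image e.symm)
  intro w hw
  apply hf
  apply hE
  intro h
  apply hw
  rw [Finset.mem_image]
  exact ⟨e w, h, by simp⟩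

def shU : (ℤ × ℤ) ≃ (ℤ × ℤ) where
  toFun w := (w.1, w.2 + 1)
  invFun w := (w.1, w.2 - 1)
  left_inv w := by simp
  right_inv w := by simp

def shR : (ℤ × ℤ) ≃ (ℤ × ℤ) where
  toFun w := (w.1 + 1, w.2)
  invFun w := (w.1 - 1, w.2)
  left_inv w := by simp
  right_inv w := by simp

lemma lap_eq (h : ℤ × ℤ → ℝ) (w : ℤ × ℤ) : lap h w = (h (shU w) + h (shU.symm w) - 2 * h w) +
    (if w.2 = 0 then 1 else 0) * (h (shR w) + h (shR.symm w) - 2 * h w) := by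
  unfold lap
  simp [shU, shR]

lemma sbp (E : Finset (ℤ × ℤ)) (H V : ℤ × ℤ → ℝ) (hE : ∀ w ∉ E, H w = 0) :
    Summable (fun w => H w * lap V w) ∧ Summable (fun w => V w * lap H w) ∧
    ∑' w, H w * lap V w = ∑' w, V w * lap H w := by
  let c : ℤ × ℤ → ℝ := fun w => if w.2 = 0 then 1 else 0
  have r1 : (fun w => H w * lap V w) = fun w => 1 * H w * V (shU w) + 1 * H w * V (shU.symm w)
     + c w * H w * V (shR w) + c w * H w * V (shR.symm w) - (2 + 2 * c w) * H w * V w := by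
    ext w; rw [lap_eq]; simp only [c]; ring
  have r2 : (fun w => V w * lap H w) = fun w => 1 * H (shU.symm w) * V w + 1 * H (shU w) * V w
     + c w * H (shR.symm w) * V w + c w * H (shR w) * V w - (2 + 2 * c w) * H w * V w := by
    ext w; rw [lap_eq]; simp only [c]; ring
  have cU : ∀ w, c (shR w) = c w := fun w => by simp [c, shR]
  have cU' : ∀ w, c (shR.symm w) = c w := fun w => by simp [c, shR]
  have s1 : ∀ (a b : ℤ × ℤ → ℝ), Summable fun w => a w * H w * b w := fun a b =>
    summ_fin E _ H (Equiv.refl _) hE (fun w hw => by simp at hw; simp [hw])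
  have s2 : ∀ (e : (ℤ × ℤ) ≃ (ℤ × ℤ)) (a b : ℤ × ℤ → ℝ), Summable fun w => a w * H (e w) * b w := fun e a b =>
    summ_fin E _ H e hE (fun w hw => by simp [hw])
  have A1 := s1 (fun _ => 1) (fun w => V (shU w))
  have A2 := s1 (fun _ => 1) (fun w => V (shU.symm w))
  have A3 := s1 c (fun w => V (shR w))
  have A4 := s1 c (fun w => V (shR.symm w))
  have A5 := s1 (fun w => 2 + 2 * c w) V
  have B1 := s2 shU.symm (fun _ => 1) V
  have B2 := s2 shU (fun _ => 1) V
  have B3 := s2 shR.symm c V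
  have B4 := s2 shR c V
  rw [r1, r2]
  refine ⟨(((A1.add A2).add A3).add A4).sub A5, (((B1.add B2).add B3).add B4).sub A5, ?_⟩
  have hA := ((((A1.hasSum.add A2.hasSum).add A3.hasSum).add A4.hasSum).sub A5.hasSum).tsum_eq
  have hB := ((((B1.hasSum.add B2.hasSum).add B3.hasSum).add B4.hasSum).sub A5.hasSum).tsum_eq
  have e1 := sbp_shift shU H V (fun _ => 1) (fun _ => rfl)
  have e2 := sbp_shift shU.symm H V (fun _ => 1) (fun _ => rfl)
  have e3 := sbp_shift shR H V c cU
  have e4 := sbp_shift shR.symm H V c cU'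
  rw [Equiv.symm_symm] at e2 e4
  refine hA.trans (Eq.trans ?_ hB.symm)
  rw [e1, e2, e3, e4]

lemma gap_abstract (H V : ℤ × ℤ → ℝ) (E : Finset (ℤ × ℤ)) (hE : ∀ w ∉ E, H w = 0)
    (h0 : ∀ w, 0 ≤ H w) (d : ℝ) (z : ℤ × ℤ)
    (hV : ∀ w, H w ≠ 0 → w ≠ (0, 0) → 1 ≤ lap V w) (hV0 : 1 - d ≤ lap V (0, 0))
    (hVH : ∀ w ≠ z, V w * lap H w ≤ 0) :
    -(V z * lap H z) ≤ d * H (0, 0) - ∑ w ∈ E, H w := by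
  obtain ⟨sa, sb, e⟩ := sbp E H V hE
  have u : ∑' w, V w * lap H w ≤ V z * lap H z := by
    rw [← tsum_ite_eq z (fun w => V w * lap H w)]
    apply sb.tsum_le_tsum _ _
    · intro w
      split_ifs with hw
      · exact le_rfl
      · exact hVH w hw
    · apply summable_of_ne_finset_zero (s := {z})
      intro w hw
      simp at hw
      simp [hw]
  have sH : Summable H (SummationFilter.unconditional _) := summable_of_ne_finset_zero (s := E) hE
  have l : ∑ w ∈ E, H w - d * H (0, 0) ≤ ∑' w, H w * lap V w := by
    rw [← tsum_eq_sum (L := SummationFilter.unconditional _) (s := E) (f := H) (fun w hw => hE w hw), ← tsum_ite_eq (0, 0) (fun w => d * H w)]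
    have s3 : Summable fun w : ℤ × ℤ => if w = (0, 0) then d * H w else 0 := by
      apply summable_of_ne_finset_zero (s := {(0, 0)})
      intro w hw
      simp at hw
      simp [hw]
    rw [← sH.tsum_sub s3]
    apply (sH.sub s3).tsum_le_tsum _ sa
    intro w
    have := h0 w
    split_ifs with hw
    · subst hw
      nlinarith
    · by_cases hz : H w = 0
      · simp [hz]
      · have := hV w hz hw
        nlinarith
  linarith

lemma lap_smul (s : ℝ) (h : ℤ × ℤ → ℝ) (w : ℤ × ℤ) : lap (fun v => s * h v) w = s * lap h w := by
  unfold lap; split_ifs <;> ring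

lemma sum_Icc_sym (f : ℤ → ℝ) (K : ℕ) : ∑ x ∈ Finset.Icc (-((K + 1 : ℕ) : ℤ)) ((K + 1 : ℕ) : ℤ), f x =
    ∑ x ∈ Finset.Icc (-(K : ℤ)) K, f x + f (K + 1) + f (-(K + 1)) := by
  have e : Finset.Icc (-((K + 1 : ℕ) : ℤ)) ((K + 1 : ℕ) : ℤ) =
      insert (-((K : ℤ) + 1)) (insert ((K : ℤ) + 1) (Finset.Icc (-(K : ℤ)) K)) := by
    ext x; simp; omega
  rw [e, Finset.sum_insert, Finset.sum_insert]
  · ring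
  · simp
  · simp; omega

noncomputable def Gam (N : ℕ) : ℝ := (N : ℝ) ^ 3 * (6 * (N : ℝ) ^ 2 + 2)

noncomputable def phi (N x0 : ℕ) (x : ℤ) : ℝ :=
  1 + Gam N * ∑ i ∈ Finset.range (min x.toNat x0), 1 / (((N : ℝ) - i) ^ 3 * ((N : ℝ) - i - 1) ^ 3)

noncomputable def bb (N x0 : ℕ) (x : ℤ) : ℝ :=
  if |x| < (N : ℤ) then ((N : ℝ) - |(x : ℝ)|) ^ 3 * phi N x0 x else 0

noncomputable def cc (N x0 : ℕ) (x : ℤ) : ℝ := if 0 ≤ x ∧ x < x0 then Gam N else 0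

lemma bb_of_le (N x0 : ℕ) (x : ℤ) (h : |x| ≤ (N : ℤ)) : bb N x0 x = ((N : ℝ) - |(x : ℝ)|) ^ 3 * phi N x0 x := by
  unfold bb
  split_ifs with h1
  · rfl
  · have : |x| = (N : ℤ) := le_antisymm h (not_lt.mp h1)
    have h2 : |(x : ℝ)| = N := by exact_mod_cast this
    rw [h2]; simp

lemma phi_nonpos (N x0 : ℕ) (x : ℤ) (h : x ≤ 0) : phi N x0 x = 1 := by
  unfold phi; simp [Int.toNat_of_nonpos h]

lemma phi_succ (N x0 : ℕ) (x : ℤ) (h : 0 ≤ x) : phi N x0 (x + 1) =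
    phi N x0 x + cc N x0 x / (((N : ℝ) - x) ^ 3 * ((N : ℝ) - x - 1) ^ 3) := by
  obtain ⟨k, rfl⟩ := Int.eq_ofNat_of_zero_le h
  unfold phi cc
  have e1 : ((k : ℤ) + 1).toNat = k + 1 := by omega
  rw [e1, Int.toNat_natCast]
  by_cases hk : k < x0
  · rw [if_pos (by omega), min_eq_left (by omega), min_eq_left (by omega), Finset.sum_range_succ]
    push_cast; ring
  · rw [if_neg (by omega), min_eq_right (by omega), min_eq_right (by omega)]
    simp

lemma bb_succ (N x0 : ℕ) (hx0 : x0 < N) (x : ℤ) (h : 0 ≤ x) (hN : x < N) : bb N x0 (x + 1) =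
    ((N : ℝ) - x - 1) ^ 3 * phi N x0 x + cc N x0 x / ((N : ℝ) - x) ^ 3 := by
  rw [bb_of_le _ _ _ (by rw [abs_of_nonneg] <;> omega), phi_succ _ _ _ h]
  have h1 : |(((x + 1 : ℤ)) : ℝ)| = x + 1 := by
    rw [abs_of_nonneg] <;> push_cast
    · rfl
    · have : (0 : ℝ) ≤ x := by exact_mod_cast h
      linarith
  rw [h1]
  have hj : (0 : ℝ) < (N : ℝ) - x := by
    have : (x : ℝ) < N := by exact_mod_cast hN
    linarith
  by_cases hc : cc N x0 x = 0
  · rw [hc]; ring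
  · have hlt : x < x0 := by
      by_contra hcon
      apply hc; unfold cc; rw [if_neg]; omega
    have hj1 : (0 : ℝ) < (N : ℝ) - x - 1 := by
      have : x + 1 < N := by omega
      have : (x : ℝ) + 1 < N := by exact_mod_cast this
      linarith
    field_simp
    ring

lemma bb_pred (N x0 : ℕ) (hx0 : x0 < N) (x : ℤ) (h : 1 ≤ x) (hN : x < N) : bb N x0 (x - 1) =
    ((N : ℝ) - x + 1) ^ 3 * phi N x0 x - cc N x0 (x - 1) / ((N : ℝ) - x) ^ 3 := by
  have e := phi_succ N x0 (x - 1) (by omega)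
  rw [sub_add_cancel] at e
  rw [bb_of_le _ _ _ (by rw [abs_of_nonneg] <;> omega), e]
  have h1 : |(((x - 1 : ℤ)) : ℝ)| = x - 1 := by
    rw [abs_of_nonneg] <;> push_cast
    · rfl
    · have : (1 : ℝ) ≤ x := by exact_mod_cast h
      linarith
  rw [h1]
  have hj : (0 : ℝ) < (N : ℝ) - x := by
    have : (x : ℝ) < N := by exact_mod_cast hN
    linarith
  push_cast
  have e2 : (N : ℝ) - (x - 1) - 1 = N - x := by ring
  have hj2 : (0 : ℝ) < (N : ℝ) - (x - 1) := by linarith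
  rw [e2]
  have e3 : (N : ℝ) - x + 1 = N - (x - 1) := by ring
  rw [e3]
  field_simp
  ring

lemma bb_rec (N x0 : ℕ) (hx0 : x0 < N) (x : ℤ) (hN : |x| < N) :
    bb N x0 (x + 1) + bb N x0 (x - 1) - 2 * bb N x0 x =
    6 * bb N x0 x / ((N : ℝ) - |(x : ℝ)|) ^ 2 - if x = x0 then Gam N / ((N : ℝ) - x0) ^ 3 else 0 := by
  have hlt := abs_lt.mp hN
  have hb := bb_of_le N x0 x hN.le
  have hjj : (0 : ℝ) < (N : ℝ) - |(x : ℝ)| := by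
    have : |(x : ℝ)| < N := by exact_mod_cast hN
    linarith
  rcases lt_trichotomy x 0 with h | h | h
  · have hx : (x : ℝ) ≤ -1 := by
      have : x ≤ -1 := by omega
      exact_mod_cast this
    rw [if_neg (by omega), hb, bb_of_le N x0 (x + 1) (by rw [abs_le]; omega), bb_of_le N x0 (x - 1) (by rw [abs_le]; omega),
      phi_nonpos _ _ _ (by omega), phi_nonpos _ _ _ (by omega), phi_nonpos _ _ _ (by omega)]
    push_cast
    rw [abs_of_nonpos (by linarith)] at hjj ⊢
    rw [abs_of_nonpos (by linarith), abs_of_nonpos (by linarith)]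
    have h2 : (N : ℝ) - -x = N + x := by ring
    rw [h2] at hjj ⊢
    field_simp
    ring
  · subst h
    have e1 := bb_succ N x0 hx0 0 le_rfl (by omega)
    have hN0 : (0 : ℝ) < N := by
      have : 0 < N := by omega
      exact_mod_cast this
    have e2 := bb_of_le N x0 (0 - 1) (by simp; omega)
    rw [e1, e2, hb, phi_nonpos _ _ _ le_rfl, phi_nonpos _ _ _ (by omega)]
    unfold cc Gam
    rcases Nat.eq_zero_or_pos x0 with h0 | h0
    · subst h0
      simp
      field_simp
      ring
    · rw [if_pos (by omega), if_neg (by omega)]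
      simp
      field_simp
      ring
  · have hx : (1 : ℝ) ≤ x := by
      have : 1 ≤ x := by omega
      exact_mod_cast this
    rw [bb_succ N x0 hx0 x (by omega) (by omega), bb_pred N x0 hx0 x (by omega) (by omega), hb]
    rw [abs_of_nonneg (by linarith)] at hjj ⊢
    have hc : cc N x0 x - cc N x0 (x - 1) = - if x = x0 then Gam N else 0 := by
      unfold cc
      split_ifs <;> first | omega | simp
    have : (if x = x0 then Gam N / ((N : ℝ) - x0) ^ 3 else 0) = (if x = x0 then Gam N else 0) / ((N : ℝ) - x) ^ 3 := by
      split_ifs with hh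
      · have : (x : ℝ) = x0 := by exact_mod_cast hh
        rw [this]
      · simp
    rw [this]
    rw [eq_neg_iff_add_eq_zero] at hc
    have h3 : cc N x0 (x - 1) = cc N x0 x + if x = x0 then Gam N else 0 := by linarith
    rw [h3]
    field_simp
    ring

lemma Gam_pos (N : ℕ) (h : 0 < N) : 0 < Gam N := by
  unfold Gam; positivity

lemma phi_pos (N x0 : ℕ) (hx0 : x0 < N) (x : ℤ) : 1 ≤ phi N x0 x := by
  unfold phi
  have : 0 ≤ ∑ i ∈ Finset.range (min x.toNat x0), 1 / (((N : ℝ) - i) ^ 3 * ((N : ℝ) - i - 1) ^ 3) := by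
    apply Finset.sum_nonneg
    intro i hi
    have h1 : i + 1 ≤ N := by simp at hi; omega
    have h2 : (i : ℝ) + 1 ≤ N := by exact_mod_cast h1
    have h3 : (0 : ℝ) ≤ (N : ℝ) - i := by linarith
    have h4 : (0 : ℝ) ≤ (N : ℝ) - i - 1 := by linarith
    positivity
  have := mul_nonneg (Gam_pos N (by omega)).le this
  linarith

lemma bb_nonneg (N x0 : ℕ) (hx0 : x0 < N) (x : ℤ) : 0 ≤ bb N x0 x := by
  unfold bb
  split_ifs with h
  · have : |(x : ℝ)| < N := by exact_mod_cast h
    have h1 : (0 : ℝ) ≤ (N : ℝ) - |(x : ℝ)| := by linarith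
    have := phi_pos N x0 hx0 x
    positivity
  · exact le_rfl

lemma phi_sum_bd (N : ℕ) (k : ℕ) (hk : k < N) :
    ∑ i ∈ Finset.range k, 1 / (((N : ℝ) - i) ^ 3 * ((N : ℝ) - i - 1) ^ 3) ≤
      1 / ((N : ℝ) - k) ^ 5 - 1 / (N : ℝ) ^ 5 := by
  induction k with
  | zero => simp
  | succ k ih =>
    rw [Finset.sum_range_succ]
    have := ih (by omega)
    have h2 : (k : ℝ) + 1 < N := by exact_mod_cast hk
    have key : ∀ u : ℝ, 0 < u → 1 / (u + 1) ^ 5 + 1 / ((u + 1) ^ 3 * u ^ 3) ≤ 1 / u ^ 5 := by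
      intro u hu
      rw [div_add_div _ _ (by positivity) (by positivity), div_le_div_iff₀ (by positivity) (by positivity)]
      have : (1 * (u + 1) ^ 5 * u ^ 5) + 0 ≤ (1 * (u + 1) ^ 5 * u ^ 5) := by simp
      have e : 1 * ((u + 1) ^ 5 * ((u + 1) ^ 3 * u ^ 3)) - (1 * ((u + 1) ^ 3 * u ^ 3) + (u + 1) ^ 5 * 1) * u ^ 5
         = (u + 1) ^ 3 * u ^ 3 * (4 * u ^ 4 + 8 * u ^ 3 + 9 * u ^ 2 + 5 * u + 1) := by ring
      have : 0 ≤ (u + 1) ^ 3 * u ^ 3 * (4 * u ^ 4 + 8 * u ^ 3 + 9 * u ^ 2 + 5 * u + 1) := by positivity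
      linarith
    have k1 := key ((N : ℝ) - k - 1) (by linarith)
    have e : (N : ℝ) - k - 1 + 1 = N - k := by ring
    rw [e] at k1
    push_cast
    rw [show (N : ℝ) - (k + 1) = N - k - 1 by ring]
    linarith

lemma phi_bd (N x0 : ℕ) (hx0 : x0 < N) (k : ℕ) (hk : k ≤ x0) :
    phi N x0 k ≤ 8 * (N : ℝ) ^ 5 / ((N : ℝ) - k) ^ 5 := by
  have h := phi_sum_bd N k (by omega)
  unfold phi
  rw [Int.toNat_natCast, min_eq_left hk]
  have hN : (1 : ℝ) ≤ N := by
    have : 1 ≤ N := by omega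
    exact_mod_cast this
  have hG : Gam N ≤ 8 * (N : ℝ) ^ 5 := by
    unfold Gam
    have : (0 : ℝ) ≤ (N : ℝ) ^ 3 * (N ^ 2 - 1) := by
      apply mul_nonneg (by positivity); nlinarith
    nlinarith
  have hd : 0 ≤ 1 / ((N : ℝ) - k) ^ 5 - 1 / (N : ℝ) ^ 5 := by
    rw [sub_nonneg]
    have : (k : ℝ) + 1 ≤ N := by exact_mod_cast (by omega : k + 1 ≤ N)
    have : (0 : ℝ) < N - k := by linarith
    apply one_div_le_one_div_of_le (by positivity)
    apply pow_le_pow_left₀ this.le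
    simp
  have hG0 := Gam_pos N (by omega)
  have : Gam N * ∑ i ∈ Finset.range k, 1 / (((N : ℝ) - i) ^ 3 * ((N : ℝ) - i - 1) ^ 3) ≤
      8 * (N : ℝ) ^ 5 * (1 / ((N : ℝ) - k) ^ 5 - 1 / (N : ℝ) ^ 5) :=
    (mul_le_mul_of_nonneg_left h hG0.le).trans (mul_le_mul_of_nonneg_right hG hd)
  have e : 8 * (N : ℝ) ^ 5 * (1 / ((N : ℝ) - k) ^ 5 - 1 / (N : ℝ) ^ 5) = 8 * (N : ℝ) ^ 5 / ((N : ℝ) - k) ^ 5 - 8 := by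
    field_simp
  linarith

lemma bb_bd (N x0 : ℕ) (hx0 : x0 < N) (x : ℤ) :
    bb N x0 x ≤ 6 * Gam N / ((N : ℝ) - x0 + |(x : ℝ) - x0|) ^ 2 := by
  have hN : (1 : ℝ) ≤ N := by
    have : 1 ≤ N := by omega
    exact_mod_cast this
  have hm : (1 : ℝ) ≤ (N : ℝ) - x0 := by
    have : (x0 : ℝ) + 1 ≤ N := by exact_mod_cast hx0
    linarith
  have hG : 6 * (N : ℝ) ^ 5 ≤ Gam N := by
    unfold Gam
    have : (0 : ℝ) ≤ (N : ℝ) ^ 3 := by positivity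
    nlinarith
  have hG0 := Gam_pos N (by omega)
  by_cases hx : |x| < (N : ℤ)
  swap
  · unfold bb; rw [if_neg hx]; positivity
  rw [bb_of_le _ _ _ hx.le]
  have hxl := abs_lt.mp hx
  have hx1 : (x : ℝ) < N := by exact_mod_cast hxl.2
  have hx2 : -(N : ℝ) < x := by exact_mod_cast hxl.1
  have hx0' : (0 : ℝ) ≤ x0 := by positivity
  rw [le_div_iff₀ (by positivity)]
  rcases le_or_gt x 0 with h0 | h0
  · have h0' : (x : ℝ) ≤ 0 := by exact_mod_cast h0
    rw [phi_nonpos _ _ _ h0, abs_of_nonpos h0', abs_of_nonpos (by linarith)]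
    have a1 : ((N : ℝ) - -x) ^ 3 ≤ N ^ 3 := by
      apply pow_le_pow_left₀ <;> linarith
    have a2 : ((N : ℝ) - x0 + -(x - x0)) ^ 2 ≤ (2 * N) ^ 2 := by
      apply pow_le_pow_left₀ <;> linarith
    have a3 : ((N : ℝ) - -x) ^ 3 * 1 * ((N : ℝ) - x0 + -(x - x0)) ^ 2 ≤ N ^ 3 * 1 * (2 * N) ^ 2 := by gcongr
    nlinarith
  · obtain ⟨k, rfl⟩ := Int.eq_ofNat_of_zero_le h0.le
    simp only [Int.cast_natCast, Nat.abs_cast] at hx1 ⊢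
    rcases le_or_gt k x0 with h1 | h1
    · have b := phi_bd N x0 hx0 k h1
      have h1' : (k : ℝ) ≤ x0 := by exact_mod_cast h1
      rw [abs_of_nonpos (by linarith)]
      have hj : 0 < (N : ℝ) - k := by linarith
      calc ((N : ℝ) - k) ^ 3 * phi N x0 k * ((N : ℝ) - x0 + -(k - x0)) ^ 2
          ≤ ((N : ℝ) - k) ^ 3 * (8 * (N : ℝ) ^ 5 / ((N : ℝ) - k) ^ 5) * ((N : ℝ) - x0 + -(k - x0)) ^ 2 := by gcongr
        _ = 8 * (N : ℝ) ^ 5 := by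
          rw [show (N : ℝ) - x0 + -(k - x0) = N - k by ring]
          field_simp
        _ ≤ _ := by linarith
    · have b := phi_bd N x0 hx0 x0 le_rfl
      have e : phi N x0 (k : ℤ) = phi N x0 (x0 : ℤ) := by
        unfold phi; simp [h1.le]
      have h1' : (x0 : ℝ) < k := by exact_mod_cast h1
      rw [abs_of_nonneg (by linarith), e]
      have hj : 0 < (N : ℝ) - k := by linarith
      have a1 : ((N : ℝ) - k) ^ 2 ≤ (N - x0) ^ 2 := by
        apply pow_le_pow_left₀ <;> linarith
      have a2 : (N - k) * ((N : ℝ) - x0 + (k - x0)) ≤ (N - x0) ^ 2 := by nlinarith [sq_nonneg ((k : ℝ) - x0)]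
      have a3 : (N : ℝ) - x0 + (k - x0) ≤ 2 * (N - x0) := by linarith
      have hp : 0 < (N : ℝ) - x0 + (k - x0) := by linarith
      calc ((N : ℝ) - k) ^ 3 * phi N x0 x0 * ((N : ℝ) - x0 + (k - x0)) ^ 2
          ≤ ((N : ℝ) - k) ^ 3 * (8 * (N : ℝ) ^ 5 / ((N : ℝ) - x0) ^ 5) * ((N : ℝ) - x0 + (k - x0)) ^ 2 := by gcongr
        _ = ((N - k) * ((N : ℝ) - x0 + (k - x0))) ^ 2 * (N - k) * (8 * (N : ℝ) ^ 5 / ((N : ℝ) - x0) ^ 5) := by ring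
        _ ≤ ((N - x0) ^ 2) ^ 2 * (N - x0) * (8 * (N : ℝ) ^ 5 / ((N : ℝ) - x0) ^ 5) := by
          gcongr
        _ = 8 * (N : ℝ) ^ 5 := by field_simp
        _ ≤ _ := by linarith

noncomputable def lam (N : ℕ) (x : ℤ) : ℝ := ((N : ℝ) - |(x : ℝ)|) ^ 2 / 3

noncomputable def VV (N : ℕ) (w : ℤ × ℤ) : ℝ := (lam N w.1 - |(w.2 : ℝ)|) ^ 2 / 2 - 1 / 2

noncomputable def tf (L : ℝ) (y : ℤ) : ℝ := max 0 (1 - |(y : ℝ)| / L)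

noncomputable def Gf (D L : ℝ) (y0 : ℕ) (y : ℤ) : ℝ :=
  D * max 0 (min (y : ℝ) (y0 * (L - y) / (L - y0)))

noncomputable def HH (N x0 y0 : ℕ) (w : ℤ × ℤ) : ℝ :=
  bb N x0 w.1 * tf (lam N w.1) w.2 +
    if w.1 = x0 then Gf (Gam N / ((N : ℝ) - x0) ^ 3) (lam N x0) y0 w.2 else 0

lemma abs_shift (y : ℤ) (hy : y ≠ 0) : (|(((y + 1 : ℤ)) : ℝ)| = |(y : ℝ)| + 1 ∧ |(((y - 1 : ℤ)) : ℝ)| = |(y : ℝ)| - 1) ∨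
    (|(((y + 1 : ℤ)) : ℝ)| = |(y : ℝ)| - 1 ∧ |(((y - 1 : ℤ)) : ℝ)| = |(y : ℝ)| + 1) := by
  rcases lt_or_gt_of_ne hy with h | h
  · right
    have : (y : ℝ) ≤ -1 := by exact_mod_cast (by omega : y ≤ -1)
    push_cast
    rw [abs_of_nonpos (by linarith), abs_of_nonpos (by linarith), abs_of_nonpos (by linarith)]
    constructor <;> ring
  · left
    have : (1 : ℝ) ≤ y := by exact_mod_cast (by omega : 1 ≤ y)
    push_cast
    rw [abs_of_nonneg (by linarith), abs_of_nonneg (by linarith), abs_of_nonneg (by linarith)]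
    constructor <;> ring

lemma tf_sum (L : ℝ) (y : ℤ) (hy : y ≠ 0) : tf L (y + 1) + tf L (y - 1) =
    max 0 (1 - |(y : ℝ)| / L - 1 / L) + max 0 (1 - |(y : ℝ)| / L + 1 / L) := by
  unfold tf
  rcases abs_shift y hy with ⟨h1, h2⟩ | ⟨h1, h2⟩ <;> rw [h1, h2]
  · congr 2 <;> ring
  · rw [add_comm]; congr 2 <;> ring

lemma tf_conv (L : ℝ) (y : ℤ) (hy : y ≠ 0) : 0 ≤ tf L (y + 1) + tf L (y - 1) - 2 * tf L y := by
  rw [tf_sum L y hy]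
  unfold tf
  generalize 1 - |(y : ℝ)| / L = a
  generalize 1 / L = b
  have h1 := le_max_left 0 (a - b)
  have h2 := le_max_right 0 (a - b)
  have h3 := le_max_left 0 (a + b)
  have h4 := le_max_right 0 (a + b)
  rcases max_choice 0 a with h | h <;> rw [h] <;> linarith

lemma tf_harm (L : ℝ) (hL : 0 < L) (y : ℤ) (hy : y ≠ 0) (h : |(y : ℝ)| + 1 ≤ L ∨ L + 1 ≤ |(y : ℝ)|) :
    tf L (y + 1) + tf L (y - 1) - 2 * tf L y = 0 := by
  rw [tf_sum L y hy]
  unfold tf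
  have hb : 0 < 1 / L := by positivity
  have e : 1 - |(y : ℝ)| / L = (L - |(y : ℝ)|) * (1 / L) := by field_simp
  have e1 : 1 - |(y : ℝ)| / L - 1 / L = (L - |(y : ℝ)| - 1) * (1 / L) := by field_simp
  have e2 : 1 - |(y : ℝ)| / L + 1 / L = (L - |(y : ℝ)| + 1) * (1 / L) := by field_simp
  rw [e1, e2, e]
  rcases h with h | h
  · rw [max_eq_right (mul_nonneg (by linarith) hb.le), max_eq_right (mul_nonneg (by linarith) hb.le),
      max_eq_right (mul_nonneg (by linarith) hb.le)]
    ring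
  · rw [max_eq_left (mul_nonpos_of_nonpos_of_nonneg (by linarith) hb.le), max_eq_left (mul_nonpos_of_nonpos_of_nonneg (by linarith) hb.le),
      max_eq_left (mul_nonpos_of_nonpos_of_nonneg (by linarith) hb.le)]
    ring

lemma Gf_neg (D L : ℝ) (y0 : ℕ) (y : ℤ) (hy : y ≤ 0) : Gf D L y0 y = 0 := by
  unfold Gf
  have : (y : ℝ) ≤ 0 := by exact_mod_cast hy
  rw [max_eq_left ((min_le_left _ _).trans this), mul_zero]

lemma Gf_mid (D L : ℝ) (y0 : ℕ) (hL : (y0 : ℝ) < L) (y : ℤ) (hy : 0 ≤ y) (h : y ≤ y0) : Gf D L y0 y = D * y := by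
  unfold Gf
  have h1 : (0 : ℝ) ≤ y := by exact_mod_cast hy
  have h2 : (y : ℝ) ≤ y0 := by exact_mod_cast h
  rw [min_eq_left, max_eq_right h1]
  rw [le_div_iff₀ (by linarith)]
  nlinarith

lemma Gf_hi (D L : ℝ) (y0 : ℕ) (hL : (y0 : ℝ) < L) (y : ℤ) (h : y0 ≤ y) :
    Gf D L y0 y = D * (y0 / (L - y0)) * max 0 (L - y) := by
  unfold Gf
  have h2 : (y0 : ℝ) ≤ y := by exact_mod_cast h
  have h3 : (0 : ℝ) ≤ y0 := by positivity
  have h4 : 0 < L - y0 := by linarith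
  rw [min_eq_right]
  · rw [mul_div_right_comm, mul_assoc, mul_max_of_nonneg _ _ (div_nonneg h3 h4.le), mul_zero]
  · rw [div_le_iff₀ h4]
    nlinarith

lemma Gf_nonneg (D L : ℝ) (hD : 0 ≤ D) (y0 : ℕ) (y : ℤ) : 0 ≤ Gf D L y0 y :=
  mul_nonneg hD (le_max_left _ _)

lemma Gf_le (D L : ℝ) (hD : 0 ≤ D) (y0 : ℕ) (hL : (y0 : ℝ) < L) (y : ℤ) : Gf D L y0 y ≤ D * y0 := by
  have h3 : (0 : ℝ) ≤ y0 := by positivity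
  rcases le_total y y0 with h | h
  · rcases le_total y 0 with h' | h'
    · rw [Gf_neg _ _ _ _ h']; positivity
    · rw [Gf_mid _ _ _ hL _ h' h]
      have h2 : (y : ℝ) ≤ y0 := by exact_mod_cast h
      gcongr
  · unfold Gf
    have h2 : (y0 : ℝ) ≤ y := by exact_mod_cast h
    have h4 : 0 < L - y0 := by linarith
    gcongr
    apply max_le h3
    refine (min_le_right _ _).trans ?_
    rw [div_le_iff₀ h4]
    nlinarith

lemma Gf_supp (D L : ℝ) (y0 : ℕ) (hL : (y0 : ℝ) < L) (y : ℤ) (h : L ≤ |(y : ℝ)|) : Gf D L y0 y = 0 := by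
  rcases le_total y 0 with h' | h'
  · exact Gf_neg _ _ _ _ h'
  · have h1 : (0 : ℝ) ≤ y := by exact_mod_cast h'
    rw [abs_of_nonneg h1] at h
    have : (y0 : ℝ) ≤ y := by linarith
    rw [Gf_hi _ _ _ hL _ (by exact_mod_cast this), max_eq_left (by linarith), mul_zero]

lemma Gf_conv (D L : ℝ) (hD : 0 ≤ D) (y0 : ℕ) (hL : (y0 : ℝ) < L) (y : ℤ) (hy : y ≠ 0) (hy0 : y ≠ y0) :
    0 ≤ Gf D L y0 (y + 1) + Gf D L y0 (y - 1) - 2 * Gf D L y0 y ∧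
    ((|(y : ℝ)| + 1 ≤ L ∨ L + 1 ≤ |(y : ℝ)|) → Gf D L y0 (y + 1) + Gf D L y0 (y - 1) - 2 * Gf D L y0 y = 0) := by
  rcases lt_or_gt_of_ne hy with h | h
  · rw [Gf_neg _ _ _ _ (by omega), Gf_neg _ _ _ _ (by omega), Gf_neg _ _ _ _ (by omega)]
    simp
  rcases lt_or_gt_of_ne hy0 with h' | h'
  · rw [Gf_mid _ _ _ hL _ (by omega) (by omega), Gf_mid _ _ _ hL _ (by omega) (by omega), Gf_mid _ _ _ hL _ (by omega) (by omega)]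
    push_cast
    constructor
    · apply le_of_eq; ring
    · intro _; ring
  · rw [Gf_hi _ _ _ hL _ (by omega), Gf_hi _ _ _ hL _ (by omega), Gf_hi _ _ _ hL _ (by omega)]
    push_cast
    have h4 : 0 < L - y0 := by linarith
    have hc : 0 ≤ D * (y0 / (L - y0)) := by positivity
    generalize D * (y0 / (L - y0)) = c at hc
    have e : c * max 0 (L - (y + 1)) + c * max 0 (L - (y - 1)) - 2 * (c * max 0 (L - y)) =
      c * (max 0 (L - (y + 1)) + max 0 (L - (y - 1)) - 2 * max 0 (L - (y:ℝ))) := by ring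
    rw [e]
    have h1 : (0 : ℝ) ≤ y := by exact_mod_cast h.le
    constructor
    · apply mul_nonneg hc
      have h1 := le_max_left 0 (L - (y + 1))
      have h2 := le_max_right 0 (L - (y + 1))
      have h3 := le_max_left 0 (L - (y - 1))
      have h4 := le_max_right 0 (L - (y - 1))
      rcases max_choice 0 (L - (y : ℝ)) with h | h <;> rw [h] <;> linarith
    · rw [abs_of_nonneg h1]
      rintro (h | h)
      · rw [max_eq_right (by linarith), max_eq_right (by linarith), max_eq_right (by linarith)]; ring
      · rw [max_eq_left (by linarith), max_eq_left (by linarith), max_eq_left (by linarith)]; ring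

lemma Gf_peak (D L : ℝ) (y0 : ℕ) (hL : (y0 : ℝ) + 1 ≤ L) (h : 1 ≤ y0) :
    Gf D L y0 (y0 + 1) + Gf D L y0 (y0 - 1) - 2 * Gf D L y0 y0 = - (D * L / (L - y0)) := by
  have hL' : (y0 : ℝ) < L := by linarith
  rw [Gf_hi _ _ _ hL' _ (by omega), Gf_mid _ _ _ hL' _ (by omega) (by omega), Gf_mid _ _ _ hL' _ (by omega) (by omega)]
  push_cast
  have h4 : 0 < L - y0 := by linarith
  rw [max_eq_right (by linarith)]
  field_simp
  ring

lemma lapV_ne (N : ℕ) (w : ℤ × ℤ) (hy : w.2 ≠ 0) : lap (VV N) w = 1 := by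
  obtain ⟨x, y⟩ := w
  simp only at hy
  unfold lap VV
  simp only [hy, if_false]
  rcases abs_shift y hy with ⟨h1, h2⟩ | ⟨h1, h2⟩ <;> rw [h1, h2] <;> ring

lemma lapV_axis (N : ℕ) (x : ℤ) (hx : x ≠ 0) : lap (VV N) (x, 0) = 1 + 1 / 9 := by
  unfold lap VV lam
  simp only [if_true]
  rcases abs_shift x hx with ⟨h1, h2⟩ | ⟨h1, h2⟩ <;> rw [h1, h2] <;> norm_num <;> ring

lemma lapV_zero (N : ℕ) : lap (VV N) (0, 0) = 1 - (4 * (N : ℝ) ^ 3 + 4 * N - 1) / 9 := by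
  unfold lap VV lam
  simp only [if_true]
  norm_num
  ring

section
variable (N x0 y0 : ℕ) (hx0 : x0 < N) (hy0 : (y0 : ℝ) + 1 ≤ lam N x0)
include hx0

lemma lam_pos (x : ℤ) (hx : |x| < N) : 0 < lam N x := by
  unfold lam
  have : |(x : ℝ)| < N := by exact_mod_cast hx
  have : 0 < (N : ℝ) - |(x : ℝ)| := by linarith
  positivity

lemma bb_zero (x : ℤ) (hx : ¬ |x| < (N : ℤ)) : bb N x0 x = 0 := by
  unfold bb; rw [if_neg hx]

lemma D_pos : 0 < Gam N / ((N : ℝ) - x0) ^ 3 := by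
  have : (x0 : ℝ) < N := by exact_mod_cast hx0
  have : 0 < (N : ℝ) - x0 := by linarith
  have := Gam_pos N (by omega)
  positivity

lemma HH_nonneg (w : ℤ × ℤ) : 0 ≤ HH N x0 y0 w := by
  unfold HH
  have h1 := bb_nonneg N x0 hx0 w.1
  have h2 : 0 ≤ tf (lam N w.1) w.2 := le_max_left _ _
  have h3 := Gf_nonneg _ (lam N x0) (D_pos N x0 hx0).le y0 w.2
  split_ifs <;> positivity

lemma lapH_tooth (x y : ℤ) (hy : y ≠ 0) : lap (HH N x0 y0) (x, y) =
    bb N x0 x * (tf (lam N x) (y + 1) + tf (lam N x) (y - 1) - 2 * tf (lam N x) y) +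
    if x = x0 then Gf (Gam N / ((N : ℝ) - x0) ^ 3) (lam N x0) y0 (y + 1) + Gf (Gam N / ((N : ℝ) - x0) ^ 3) (lam N x0) y0 (y - 1)
      - 2 * Gf (Gam N / ((N : ℝ) - x0) ^ 3) (lam N x0) y0 y else 0 := by
  unfold lap HH
  simp only [hy, if_false]
  split_ifs <;> ring

lemma lapH_axis (x : ℤ) : lap (HH N x0 y0) (x, 0) =
    2 * bb N x0 x * tf (lam N x) 1 - 2 * bb N x0 x +
    (bb N x0 (x + 1) + bb N x0 (x - 1) - 2 * bb N x0 x) +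
    if x = x0 then Gf (Gam N / ((N : ℝ) - x0) ^ 3) (lam N x0) y0 1 else 0 := by
  unfold lap HH
  have t0 : ∀ L, tf L 0 = 1 := fun L => by simp [tf]
  have t1 : ∀ L, tf L (-1) = tf L 1 := fun L => by simp [tf]
  have g0 : ∀ D L, Gf D L y0 0 = 0 := fun D L => Gf_neg _ _ _ _ le_rfl
  have g1 : ∀ D L, Gf D L y0 (-1) = 0 := fun D L => Gf_neg _ _ _ _ (by norm_num)
  simp only [if_true, zero_add, zero_sub, t0, t1, g0, g1]
  split_ifs <;> ring

include hy0

lemma lapH_main (w : ℤ × ℤ) (hw : w ≠ ((x0 : ℤ), (y0 : ℤ))) :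
    0 ≤ lap (HH N x0 y0) w ∧ VV N w * lap (HH N x0 y0) w ≤ 0 := by
  obtain ⟨x, y⟩ := w
  have hD := D_pos N x0 hx0
  have hL' : (y0 : ℝ) < lam N x0 := by
    have := hy0; linarith
  have comb : ∀ a V : ℝ, 0 ≤ a → (a = 0 ∨ V ≤ 0) → 0 ≤ a ∧ V * a ≤ 0 := by
    intro a V h1 h2
    refine ⟨h1, ?_⟩
    rcases h2 with h | h
    · simp [h]
    · exact mul_nonpos_of_nonpos_of_nonneg h h1
  have Vneg : ∀ y : ℤ, ¬ (|(y : ℝ)| + 1 ≤ lam N x ∨ lam N x + 1 ≤ |(y : ℝ)|) → VV N (x, y) ≤ 0 := by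
    intro y hh
    push Not at hh
    unfold VV
    simp only
    nlinarith
  apply comb
  · by_cases hy : y = 0
    · subst hy
      rw [lapH_axis N x0 y0 hx0]
      by_cases hx : |x| < (N : ℤ)
      · have hl := lam_pos N x0 hx0 x hx
        rw [bb_rec N x0 hx0 x hx]
        have ht : 1 - 1 / lam N x ≤ tf (lam N x) 1 := by
          unfold tf; simp
        have hb := bb_nonneg N x0 hx0 x
        have e : 6 * bb N x0 x / ((N : ℝ) - |(x : ℝ)|) ^ 2 = 2 * bb N x0 x * (1 / lam N x) := by
          have : |(x : ℝ)| < N := by exact_mod_cast hx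
          have : 0 < (N : ℝ) - |(x : ℝ)| := by linarith
          unfold lam; field_simp; ring
        have hm := mul_le_mul_of_nonneg_left ht hb
        rw [e]
        split_ifs with hxx
        · subst hxx
          have : y0 ≠ 0 := by rintro rfl; simp at hw
          rw [Gf_mid _ _ _ hL' _ (by omega) (by omega)]
          push_cast
          linarith
        · linarith
      · rw [bb_zero N x0 hx0 x hx, if_neg (by rintro rfl; simp at hx; omega)]
        have h1 := bb_nonneg N x0 hx0 (x + 1)
        have h2 := bb_nonneg N x0 hx0 (x - 1)
        linarith
    · rw [lapH_tooth N x0 y0 hx0 x y hy]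
      have h1 := mul_nonneg (bb_nonneg N x0 hx0 x) (tf_conv (lam N x) y hy)
      split_ifs with hxx
      · have := (Gf_conv _ (lam N x0) hD.le y0 hL' y hy (by rintro rfl; exact hw (by rw [hxx]))).1
        linarith
      · linarith
  · by_cases hx : |x| < (N : ℤ)
    · have hl := lam_pos N x0 hx0 x hx
      by_cases hh : (|(y : ℝ)| + 1 ≤ lam N x ∨ lam N x + 1 ≤ |(y : ℝ)|)
      swap
      · right; exact Vneg y hh
      left
      by_cases hy : y = 0
      · subst hy
        rw [lapH_axis N x0 y0 hx0, bb_rec N x0 hx0 x hx]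
        have hl1 : 1 ≤ lam N x := by
          rcases hh with h | h
          · simpa using h
          · simp at h; linarith
        have ht : tf (lam N x) 1 = 1 - 1 / lam N x := by
          unfold tf; simp
          exact inv_le_one_of_one_le₀ hl1
        have e : 6 * bb N x0 x / ((N : ℝ) - |(x : ℝ)|) ^ 2 = 2 * bb N x0 x * (1 / lam N x) := by
          have : |(x : ℝ)| < N := by exact_mod_cast hx
          have : 0 < (N : ℝ) - |(x : ℝ)| := by linarith
          unfold lam; field_simp; ring
        rw [e, ht]
        split_ifs with hxx
        · subst hxx
          have : y0 ≠ 0 := by rintro rfl; simp at hw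
          rw [Gf_mid _ _ _ hL' _ (by omega) (by omega)]
          push_cast
          ring
        · ring
      · rw [lapH_tooth N x0 y0 hx0 x y hy, tf_harm _ hl y hy hh]
        split_ifs with hxx
        · have := (Gf_conv _ (lam N x0) hD.le y0 hL' y hy (by rintro rfl; exact hw (by rw [hxx]))).2 (by rw [← hxx]; exact hh)
          rw [this]; simp
        · simp
    · have hxx : x ≠ x0 := by rintro rfl; simp at hx; omega
      by_cases hy : y = 0
      · subst hy
        by_cases hxN : |x| = (N : ℤ)
        · right
          apply Vneg
          have : |(x : ℝ)| = N := by exact_mod_cast hxN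
          unfold lam; rw [this]; norm_num
        · left
          rw [lapH_axis N x0 y0 hx0, if_neg hxx, bb_zero N x0 hx0 x hx, bb_zero N x0 hx0 (x + 1), bb_zero N x0 hx0 (x - 1)]
          · ring
          · rw [abs_lt] at *; have : ¬ (x = N ∨ x = -N) := fun h => hxN (by rcases h with h | h <;> simp [h])
            omega
          · rw [abs_lt] at *; have : ¬ (x = N ∨ x = -N) := fun h => hxN (by rcases h with h | h <;> simp [h])
            omega
      · left
        rw [lapH_tooth N x0 y0 hx0 x y hy, if_neg hxx, bb_zero N x0 hx0 x hx]; ring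

lemma lapH_z : lap (HH N x0 y0) ((x0 : ℤ), (y0 : ℤ)) =
    - (Gam N / ((N : ℝ) - x0) ^ 3 * lam N x0 / (lam N x0 - y0)) := by
  have hx : |(x0 : ℤ)| < (N : ℤ) := by simp; omega
  have hl := lam_pos N x0 hx0 x0 hx
  rcases Nat.eq_zero_or_pos y0 with h | h
  · subst h
    simp only [Nat.cast_zero]
    rw [lapH_axis N x0 0 hx0, bb_rec N x0 hx0 x0 hx]
    have hl1 : 1 ≤ lam N x0 := by simpa using hy0
    have ht : tf (lam N x0) 1 = 1 - 1 / lam N x0 := by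
      unfold tf; simp
      exact inv_le_one_of_one_le₀ hl1
    have e : 6 * bb N x0 x0 / ((N : ℝ) - |((x0 : ℤ) : ℝ)|) ^ 2 = 2 * bb N x0 x0 * (1 / lam N x0) := by
      have : |((x0 : ℤ) : ℝ)| < N := by exact_mod_cast hx
      have : 0 < (N : ℝ) - |((x0 : ℤ) : ℝ)| := by linarith
      unfold lam; field_simp; ring
    rw [e, ht, if_pos rfl, if_pos rfl, Gf_hi _ _ _ (by simpa using hl) _ (by norm_num)]
    have : lam N x0 - 0 = lam N x0 := sub_zero _
    rw [this, mul_div_assoc, div_self hl.ne']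
    simp
    ring
  · rw [lapH_tooth N x0 y0 hx0 _ _ (by omega), if_pos rfl, Gf_peak _ _ _ hy0 h, tf_harm _ hl _ (by omega)]
    · ring
    · left; simpa using hy0

end

lemma combD_finite (ρ : ℝ) : (combD ρ).Finite := by
  apply Set.Finite.subset (s := Set.Icc (-⌈|ρ|⌉) ⌈|ρ|⌉ ×ˢ Set.Icc (-⌈ρ ^ 2⌉) ⌈ρ ^ 2⌉)
    ((Set.finite_Icc _ _).prod (Set.finite_Icc _ _))
  rintro ⟨x, y⟩ ⟨h1, h2⟩
  simp only at h1 h2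
  have a0 := abs_nonneg (x : ℝ)
  have hρ : 0 < ρ := by linarith
  have a1 := Int.le_ceil |ρ|
  have a2 := Int.le_ceil (ρ ^ 2)
  have h3 : |(y : ℝ)| ≤ ρ ^ 2 := by nlinarith
  have h4 : |(x : ℝ)| ≤ |ρ| := by rw [abs_of_pos hρ]; linarith
  rw [Set.mem_prod, Set.mem_Icc, Set.mem_Icc, ← abs_le, ← abs_le]
  constructor
  · have : |(x : ℝ)| ≤ ⌈|ρ|⌉ := h4.trans a1
    exact_mod_cast this
  · have : |(y : ℝ)| ≤ ⌈ρ ^ 2⌉ := h3.trans a2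
    exact_mod_cast this

lemma sum_sq (n : ℝ) (K : ℕ) : ∑ x ∈ Finset.Icc (-(K : ℤ)) K, (2 * ((n - |(x : ℝ)|) ^ 2 / 3) - 1) =
    2 / 3 * ((2 * K + 1) * n ^ 2 - 2 * n * (K * (K + 1)) + K * (K + 1) * (2 * K + 1) / 3) - (2 * K + 1) := by
  induction K with
  | zero => simp; ring
  | succ K ih =>
    rw [sum_Icc_sym, ih]
    have h1 : |(((K : ℤ) + 1 : ℤ) : ℝ)| = K + 1 := by
      push_cast; rw [abs_of_nonneg (by positivity)]
    have h2 : |((-((K : ℤ) + 1) : ℤ) : ℝ)| = K + 1 := by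
      push_cast; rw [abs_neg, abs_of_nonneg (by positivity)]
    rw [h1, h2]
    push_cast
    ring

lemma d_lower (N : ℕ) (hN : 1 ≤ N) :
    (4 * (N : ℝ) ^ 3 + 4 * N - 1) / 9 ≤ ((combD ((N + 1 : ℕ) : ℝ)).ncard : ℝ) := by
  classical
  let L : ℤ → ℝ := fun x => (((N : ℝ) + 1) - |(x : ℝ)|) ^ 2 / 3
  let k : ℤ → ℤ := fun x => ⌈L x⌉ - 1
  let F : Finset (ℤ × ℤ) := (Finset.Icc (-(N : ℤ)) N).biUnion (fun x => {x} ×ˢ Finset.Icc (-(k x)) (k x))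
  have hF : (F : Set (ℤ × ℤ)) ⊆ combD ((N + 1 : ℕ) : ℝ) := by
    rintro ⟨x, y⟩ hw
    simp only [F, Finset.coe_biUnion, Set.mem_iUnion, Finset.mem_coe, Finset.mem_product, Finset.mem_singleton,
      Finset.mem_Icc] at hw
    obtain ⟨x', hx', rfl, hy⟩ := hw
    have h1 : |(x : ℝ)| ≤ N := by
      have := abs_le.mpr hx'
      exact_mod_cast this
    refine ⟨?_, ?_⟩
    · simp only; push_cast; linarith
    · simp only; push_cast
      have h2 : |(y : ℝ)| ≤ (k x : ℝ) := by
        have := abs_le.mpr hy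
        exact_mod_cast this
      have h3 := Int.ceil_lt_add_one (L x)
      simp only [k] at h2
      push_cast at h2
      simp only [L] at h2 h3
      linarith
  have hc : F.card ≤ (combD ((N + 1 : ℕ) : ℝ)).ncard := by
    rw [← Set.ncard_coe_finset]
    exact Set.ncard_le_ncard hF (combD_finite _)
  have hcard : F.card = ∑ x ∈ Finset.Icc (-(N : ℤ)) N, (Finset.Icc (-(k x)) (k x)).card := by
    rw [Finset.card_biUnion]
    · simp
    · intro a _ b _ hab
      simp only [Function.onFun]
      rw [Finset.disjoint_left]
      rintro ⟨x, y⟩ h1 h2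
      simp at h1 h2
      exact hab (h1.2.trans h2.2.symm)
  have hlow : ∑ x ∈ Finset.Icc (-(N : ℤ)) N, (2 * ((((N : ℝ) + 1) - |(x : ℝ)|) ^ 2 / 3) - 1) ≤ (F.card : ℝ) := by
    rw [hcard]
    push_cast
    apply Finset.sum_le_sum
    intro x _
    rw [Int.card_Icc]
    have h1 := Int.le_ceil (L x)
    have h2 : ((k x + 1 - -(k x) : ℤ) : ℝ) ≤ (((k x + 1 - -(k x)).toNat : ℤ) : ℝ) := by
      exact_mod_cast Int.self_le_toNat _
    simp only [Int.cast_natCast] at h2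
    refine le_trans ?_ h2
    simp only [k]
    push_cast
    simp only [L] at h1 ⊢
    linarith
  rw [sum_sq] at hlow
  have hc' : (F.card : ℝ) ≤ ((combD ((N + 1 : ℕ) : ℝ)).ncard : ℝ) := by exact_mod_cast hc
  have hN' : (1 : ℝ) ≤ N := by exact_mod_cast hN
  refine le_trans ?_ (hlow.trans hc')
  nlinarith

lemma sum_inv (m : ℝ) (hm : 1 ≤ m) (K : ℕ) : ∑ u ∈ Finset.Icc (-(K : ℤ)) K, 1 / (m + |(u : ℝ)|) ^ 2 ≤
    4 / m - 2 / (m + K) := by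
  induction K with
  | zero =>
    simp
    have e : 4 / m - 2 / m = 2 / m := by ring
    rw [e, inv_eq_one_div, div_le_div_iff₀ (by positivity) (by positivity)]
    nlinarith
  | succ K ih =>
    rw [sum_Icc_sym]
    have h1 : |(((K : ℤ) + 1 : ℤ) : ℝ)| = K + 1 := by
      push_cast; rw [abs_of_nonneg (by positivity)]
    have h2 : |((-((K : ℤ) + 1) : ℤ) : ℝ)| = K + 1 := by
      push_cast; rw [abs_neg, abs_of_nonneg (by positivity)]
    rw [h1, h2]
    push_cast
    have key : ∀ u : ℝ, 0 < u → 1 / (u + 1) ^ 2 ≤ 1 / u - 1 / (u + 1) := by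
      intro u hu
      rw [div_sub_div _ _ (by positivity) (by positivity), div_le_div_iff₀ (by positivity) (by positivity)]
      nlinarith
    have := key (m + K) (by positivity)
    rw [add_assoc] at this
    have e1 : 2 / (m + K) = 2 * (1 / (m + K)) := by ring
    have e2 : 2 / (m + (K + 1)) = 2 * (1 / (m + (K + 1))) := by ring
    rw [e1] at ih
    rw [e2]
    linarith

lemma sum_inv' (N x0 : ℕ) (hx0 : x0 < N) : ∑ x ∈ Finset.Icc (-(N : ℤ)) N, 1 / ((N : ℝ) - x0 + |(x : ℝ) - x0|) ^ 2 ≤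
    4 / ((N : ℝ) - x0) := by
  classical
  have hm : (1 : ℝ) ≤ (N : ℝ) - x0 := by
    have : (x0 : ℝ) + 1 ≤ N := by exact_mod_cast hx0
    linarith
  have h := sum_inv ((N : ℝ) - x0) hm (2 * N)
  have h2 : ∑ x ∈ Finset.Icc (-(N : ℤ)) N, 1 / ((N : ℝ) - x0 + |(x : ℝ) - x0|) ^ 2 =
      ∑ u ∈ (Finset.Icc (-(N : ℤ)) N).image (fun x => x - (x0 : ℤ)), 1 / ((N : ℝ) - x0 + |(u : ℝ)|) ^ 2 := by
    rw [Finset.sum_image]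
    · push_cast; rfl
    · intro a _ b _ hab
      simp at hab; exact hab
  rw [h2]
  have h3 : ∑ u ∈ (Finset.Icc (-(N : ℤ)) N).image (fun x => x - (x0 : ℤ)), 1 / ((N : ℝ) - x0 + |(u : ℝ)|) ^ 2 ≤
      ∑ u ∈ Finset.Icc (-((2 * N : ℕ) : ℤ)) ((2 * N : ℕ) : ℤ), 1 / ((N : ℝ) - x0 + |(u : ℝ)|) ^ 2 := by
    apply Finset.sum_le_sum_of_subset_of_nonneg
    · intro u hu
      simp at hu ⊢
      omega
    · intros; positivity
  have : 0 ≤ 2 / ((N : ℝ) - x0 + (2 * N : ℕ)) := by positivity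
  linarith

lemma sum_cnt (S : Finset ℤ) (f : ℤ → ℝ) (C L : ℝ) (hL : 0 ≤ L) (hC : 0 ≤ C) (h : ∀ y, f y ≤ C)
    (h0 : ∀ y : ℤ, L ≤ |(y : ℝ)| → f y = 0) : ∑ y ∈ S, f y ≤ C * (2 * L + 1) := by
  classical
  have e : ∑ y ∈ S, f y = ∑ y ∈ S.filter (fun y : ℤ => |(y : ℝ)| < L), f y := by
    symm
    apply Finset.sum_subset (Finset.filter_subset _ _)
    intro y hy hy'
    apply h0
    by_contra hc
    exact hy' (Finset.mem_filter.mpr ⟨hy, not_le.mp hc⟩)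
  rw [e]
  have h1 : ∑ y ∈ S.filter (fun y : ℤ => |(y : ℝ)| < L), f y ≤ (S.filter (fun y : ℤ => |(y : ℝ)| < L)).card • C :=
    Finset.sum_le_card_nsmul _ _ _ (fun y _ => h y)
  refine h1.trans ?_
  rw [nsmul_eq_mul, mul_comm]
  apply mul_le_mul_of_nonneg_left _ hC
  have h2 : S.filter (fun y : ℤ => |(y : ℝ)| < L) ⊆ Finset.Icc (-⌊L⌋) ⌊L⌋ := by
    intro y hy
    have := (Finset.mem_filter.mp hy).2
    rw [Finset.mem_Icc, ← abs_le, Int.le_floor]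
    push_cast
    exact this.le
  have h3 := Finset.card_le_card h2
  rw [Int.card_Icc] at h3
  have h4 : 0 ≤ ⌊L⌋ := Int.floor_nonneg.mpr hL
  have h5 : ((S.filter (fun y : ℤ => |(y : ℝ)| < L)).card : ℤ) ≤ 2 * ⌊L⌋ + 1 := by omega
  have h6 : ((S.filter (fun y : ℤ => |(y : ℝ)| < L)).card : ℝ) ≤ 2 * ⌊L⌋ + 1 := by exact_mod_cast h5
  have := Int.floor_le L
  linarith

lemma tf_le_one (L : ℝ) (hL : 0 ≤ L) (y : ℤ) : tf L y ≤ 1 := by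
  unfold tf
  have : 0 ≤ |(y : ℝ)| / L := by positivity
  apply max_le <;> linarith

lemma tf_supp (L : ℝ) (hL : 0 < L) (y : ℤ) (h : L ≤ |(y : ℝ)|) : tf L y = 0 := by
  unfold tf
  apply max_eq_left
  have : 1 ≤ |(y : ℝ)| / L := by rwa [le_div_iff₀ hL, one_mul]
  linarith

lemma HH_supp (N x0 y0 : ℕ) (hx0 : x0 < N) (hy0 : (y0 : ℝ) + 1 ≤ lam N x0) (w : ℤ × ℤ)
    (hw : w ∉ Finset.Icc (-(N : ℤ)) N ×ˢ Finset.Icc (-((N ^ 2 : ℕ) : ℤ)) ((N ^ 2 : ℕ) : ℤ)) : HH N x0 y0 w = 0 := by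
  obtain ⟨x, y⟩ := w
  unfold HH
  simp only
  by_cases hx : |x| < (N : ℤ)
  · have hl := lam_pos N x0 hx0 x hx
    have hlN : lam N x ≤ (N : ℝ) ^ 2 := by
      unfold lam
      have : |(x : ℝ)| < N := by exact_mod_cast hx
      have h0 := abs_nonneg (x : ℝ)
      nlinarith
    have hy : lam N x ≤ |(y : ℝ)| := by
      by_contra hc
      push Not at hc
      apply hw
      rw [Finset.mem_product, Finset.mem_Icc, Finset.mem_Icc, ← abs_le, ← abs_le]
      refine ⟨hx.le, ?_⟩
      have : |(y : ℝ)| ≤ (N : ℝ) ^ 2 := by linarith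
      exact_mod_cast this
    rw [tf_supp _ hl y hy]
    split_ifs with hxx
    · rw [Gf_supp _ _ _ (by linarith) _ (by rw [← hxx]; exact hy)]; simp
    · simp
  · rw [bb_zero N x0 hx0 x hx, if_neg (by rintro rfl; simp at hx; omega)]; simp

lemma sum_HH_sq (N x0 y0 : ℕ) (hx0 : x0 < N) (hy0 : (y0 : ℝ) + 1 ≤ lam N x0) :
    ∑ w ∈ Finset.Icc (-(N : ℤ)) N ×ˢ Finset.Icc (-((N ^ 2 : ℕ) : ℤ)) ((N ^ 2 : ℕ) : ℤ), HH N x0 y0 w ^ 2 ≤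
      578 * Gam N ^ 2 := by
  have hm : (1 : ℝ) ≤ (N : ℝ) - x0 := by
    have : (x0 : ℝ) + 1 ≤ N := by exact_mod_cast hx0
    linarith
  have hG0 := Gam_pos N (by omega)
  have hD := D_pos N x0 hx0
  set D := Gam N / ((N : ℝ) - x0) ^ 3 with hDdef
  have hy00 : (0 : ℝ) ≤ y0 := by positivity
  have hlam0 : lam N x0 = ((N : ℝ) - x0) ^ 2 / 3 := by simp [lam]
  rw [Finset.sum_product]
  have step : ∀ x ∈ Finset.Icc (-(N : ℤ)) N,
      ∑ y ∈ Finset.Icc (-((N ^ 2 : ℕ) : ℤ)) ((N ^ 2 : ℕ) : ℤ), HH N x0 y0 (x, y) ^ 2 ≤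
      144 * Gam N ^ 2 * (1 / ((N : ℝ) - x0 + |(x : ℝ) - x0|) ^ 2) + if x = x0 then 2 * Gam N ^ 2 else 0 := by
    intro x hx
    have hB : ∑ y ∈ Finset.Icc (-((N ^ 2 : ℕ) : ℤ)) ((N ^ 2 : ℕ) : ℤ), (bb N x0 x * tf (lam N x) y) ^ 2 ≤
        72 * Gam N ^ 2 * (1 / ((N : ℝ) - x0 + |(x : ℝ) - x0|) ^ 2) := by
      by_cases hxN : |x| < (N : ℤ)
      · have hl := lam_pos N x0 hx0 x hxN
        have h1 : |(x : ℝ)| + 1 ≤ N := by exact_mod_cast hxN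
        have hc := sum_cnt (Finset.Icc (-((N ^ 2 : ℕ) : ℤ)) ((N ^ 2 : ℕ) : ℤ)) (fun y => (bb N x0 x * tf (lam N x) y) ^ 2)
          (bb N x0 x ^ 2) (lam N x) hl.le (by positivity)
          (fun y => by
            have t0 : 0 ≤ tf (lam N x) y := le_max_left _ _
            have t1 := tf_le_one (lam N x) hl.le y
            have b0 := bb_nonneg N x0 hx0 x
            apply pow_le_pow_left₀ (by positivity)
            nlinarith)
          (fun y hy => by simp [tf_supp _ hl y hy])
        refine hc.trans ?_
        have hj : 2 * lam N x + 1 ≤ 2 * ((N : ℝ) - x0 + |(x : ℝ) - x0|) ^ 2 := by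
          have a1 : (N : ℝ) - |(x : ℝ)| ≤ (N : ℝ) - x0 + |(x : ℝ) - x0| := by
            have := le_abs_self (x : ℝ)
            have := neg_abs_le ((x : ℝ) - x0)
            linarith
          have a2 : ((N : ℝ) - |(x : ℝ)|) ^ 2 ≤ ((N : ℝ) - x0 + |(x : ℝ) - x0|) ^ 2 :=
            pow_le_pow_left₀ (by linarith) a1 2
          unfold lam
          nlinarith
        have hb := bb_bd N x0 hx0 x
        have b0 := bb_nonneg N x0 hx0 x
        have hA : 0 < (N : ℝ) - x0 + |(x : ℝ) - x0| := by positivity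
        calc bb N x0 x ^ 2 * (2 * lam N x + 1) ≤
            (6 * Gam N / ((N : ℝ) - x0 + |(x : ℝ) - x0|) ^ 2) ^ 2 * (2 * ((N : ℝ) - x0 + |(x : ℝ) - x0|) ^ 2) := by
              gcongr
          _ = _ := by field_simp; ring
      · rw [bb_zero N x0 hx0 x hxN]; simp; positivity
    have e144 : 144 * Gam N ^ 2 * (1 / ((N : ℝ) - x0 + |(x : ℝ) - x0|) ^ 2) =
      2 * (72 * Gam N ^ 2 * (1 / ((N : ℝ) - x0 + |(x : ℝ) - x0|) ^ 2)) := by ring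
    rw [e144]
    unfold HH
    simp only
    split_ifs with hxx
    · have hGs := sum_cnt (Finset.Icc (-((N ^ 2 : ℕ) : ℤ)) ((N ^ 2 : ℕ) : ℤ)) (fun y => (Gf D (lam N x0) y0 y) ^ 2)
          ((D * lam N x0) ^ 2) (lam N x0) (by linarith) (by positivity)
          (fun y => by
            have := Gf_le D (lam N x0) hD.le y0 (by linarith) y
            apply pow_le_pow_left₀ (Gf_nonneg _ _ hD.le _ _)
            refine this.trans ?_
            gcongr; linarith)
          (fun y hy => by simp [Gf_supp D _ y0 (by linarith) y hy])
      have hGs2 : (D * lam N x0) ^ 2 * (2 * lam N x0 + 1) ≤ Gam N ^ 2 := by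
        rw [hlam0]
        set m := (N : ℝ) - x0
        have : 2 * (m ^ 2 / 3) + 1 ≤ 2 * m ^ 2 := by nlinarith
        calc (D * (m ^ 2 / 3)) ^ 2 * (2 * (m ^ 2 / 3) + 1) ≤ (D * (m ^ 2 / 3)) ^ 2 * (2 * m ^ 2) := by gcongr
          _ = 2 / 9 * Gam N ^ 2 := by rw [hDdef]; field_simp; ring
          _ ≤ _ := by nlinarith
      calc _ ≤ ∑ y ∈ Finset.Icc (-((N ^ 2 : ℕ) : ℤ)) ((N ^ 2 : ℕ) : ℤ),
            (2 * (bb N x0 x * tf (lam N x) y) ^ 2 + 2 * (Gf D (lam N x0) y0 y) ^ 2) := by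
            apply Finset.sum_le_sum
            intro y _
            nlinarith [sq_nonneg (bb N x0 x * tf (lam N x) y - Gf D (lam N x0) y0 y)]
        _ ≤ _ := by
            rw [Finset.sum_add_distrib, ← Finset.mul_sum, ← Finset.mul_sum]
            linarith
    · simp only [add_zero]
      have : 0 ≤ ∑ y ∈ Finset.Icc (-((N ^ 2 : ℕ) : ℤ)) ((N ^ 2 : ℕ) : ℤ), (bb N x0 x * tf (lam N x) y) ^ 2 :=
        Finset.sum_nonneg (fun _ _ => sq_nonneg _)
      linarith
  refine (Finset.sum_le_sum step).trans ?_
  rw [Finset.sum_add_distrib, ← Finset.mul_sum, Finset.sum_ite_eq']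
  have hs := sum_inv' N x0 hx0
  have h4 : 4 / ((N : ℝ) - x0) ≤ 4 := by
    rw [div_le_iff₀ (by linarith)]; linarith
  have hs2 : 144 * Gam N ^ 2 * ∑ x ∈ Finset.Icc (-(N : ℤ)) N, 1 / ((N : ℝ) - x0 + |(x : ℝ) - x0|) ^ 2 ≤ 144 * Gam N ^ 2 * 4 := by
    gcongr; exact hs.trans h4
  have : (if (x0 : ℤ) ∈ Finset.Icc (-(N : ℤ)) N then 2 * Gam N ^ 2 else 0) ≤ 2 * Gam N ^ 2 := by
    split_ifs
    · exact le_rfl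
    · positivity
  linarith

lemma HH_bd (N x0 y0 : ℕ) (hx0 : x0 < N) (hy0 : (y0 : ℝ) + 1 ≤ lam N x0) (w : ℤ × ℤ) :
    HH N x0 y0 w ≤ 7 * Gam N / ((N : ℝ) - x0) := by
  have hm : (1 : ℝ) ≤ (N : ℝ) - x0 := by
    have : (x0 : ℝ) + 1 ≤ N := by exact_mod_cast hx0
    linarith
  have hG0 := Gam_pos N (by omega)
  have hD := D_pos N x0 hx0
  have hlam0 : lam N x0 = ((N : ℝ) - x0) ^ 2 / 3 := by simp [lam]
  have hl : 0 ≤ lam N w.1 := by unfold lam; positivity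
  have t0 : 0 ≤ tf (lam N w.1) w.2 := le_max_left _ _
  have t1 := tf_le_one (lam N w.1) hl w.2
  have b0 := bb_nonneg N x0 hx0 w.1
  have hb := bb_bd N x0 hx0 w.1
  have hb2 : 6 * Gam N / ((N : ℝ) - x0 + |(w.1 : ℝ) - x0|) ^ 2 ≤ 6 * Gam N / ((N : ℝ) - x0) := by
    apply div_le_div_of_nonneg_left (by positivity) (by positivity)
    have := abs_nonneg ((w.1 : ℝ) - x0)
    nlinarith
  have h1 : bb N x0 w.1 * tf (lam N w.1) w.2 ≤ 6 * Gam N / ((N : ℝ) - x0) := by nlinarith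
  have h2 : (if w.1 = (x0 : ℤ) then Gf (Gam N / ((N : ℝ) - x0) ^ 3) (lam N x0) y0 w.2 else 0) ≤ Gam N / ((N : ℝ) - x0) := by
    split_ifs
    · refine (Gf_le _ _ hD.le _ (by linarith) _).trans ?_
      calc Gam N / ((N : ℝ) - x0) ^ 3 * y0 ≤ Gam N / ((N : ℝ) - x0) ^ 3 * ((N : ℝ) - x0) ^ 2 := by
            gcongr
            rw [hlam0] at hy0
            nlinarith
        _ = _ := by field_simp
    · positivity
  unfold HH
  have e : 7 * Gam N / ((N : ℝ) - x0) = 6 * Gam N / ((N : ℝ) - x0) + Gam N / ((N : ℝ) - x0) := by ring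
  rw [e]
  linarith

lemma core_pos (N x0 y0 : ℕ) (T : ℝ) (hT : 10 ≤ T) (hx : (x0 : ℝ) < (N : ℝ) + 1 - T)
    (hy : (y0 : ℝ) < ((N : ℝ) + 1 - T - x0) ^ 2 / 3) :
    ∃ (h : ℤ × ℤ → ℝ) (E : Finset (ℤ × ℤ)), (∀ w, 0 ≤ h w) ∧ (∀ w, h w ≤ 1 / 2) ∧ (∀ w ∉ E, h w = 0) ∧
      (∀ w ≠ ((x0 : ℤ), (y0 : ℤ)), 0 ≤ lap h w) ∧
      1 / 20000000 * T ^ 2 ≤ ((combD ((N + 1 : ℕ) : ℝ)).ncard : ℝ) * h (0, 0) - ∑ w ∈ E, h w - ∑ w ∈ E, h w ^ 2 := by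
  have hx0 : x0 < N := by
    have : (x0 : ℝ) < N := by linarith
    exact_mod_cast this
  have hG0 := Gam_pos N (by omega)
  have hlam0 : lam N x0 = ((N : ℝ) - x0) ^ 2 / 3 := by simp [lam]
  obtain ⟨m, hm⟩ : ∃ m : ℝ, m = (N : ℝ) - x0 := ⟨_, rfl⟩
  have hmT : T < m + 1 := by rw [hm]; linarith
  have hy1 : (y0 : ℝ) < (m + 1 - T) ^ 2 / 3 := by
    rw [hm]; convert hy using 3; ring
  have hr : T * m / 6 ≤ lam N x0 - y0 := by
    rw [hlam0, ← hm]
    have : (T - 1) * m ≤ (T - 1) * (2 * m + 1 - T) := mul_le_mul_of_nonneg_left (by linarith) (by linarith)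
    nlinarith
  have hr2 : 2 ≤ lam N x0 - y0 := by nlinarith
  have hy0 : (y0 : ℝ) + 1 ≤ lam N x0 := by linarith
  have hm9 : 9 ≤ m := by linarith
  let E := Finset.Icc (-(N : ℤ)) N ×ˢ Finset.Icc (-((N ^ 2 : ℕ) : ℤ)) ((N ^ 2 : ℕ) : ℤ)
  have hE : ∀ w ∉ E, HH N x0 y0 w = 0 := fun w hw => HH_supp N x0 y0 hx0 hy0 w hw
  have gap := gap_abstract (HH N x0 y0) (VV N) E hE (HH_nonneg N x0 y0 hx0)
    ((combD ((N + 1 : ℕ) : ℝ)).ncard : ℝ) ((x0 : ℤ), (y0 : ℤ))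
    (fun w _ hw => by
      by_cases hw2 : w.2 = 0
      · obtain ⟨x, y⟩ := w
        simp only at hw2
        subst hw2
        rw [lapV_axis N x (by rintro rfl; exact hw rfl)]; norm_num
      · rw [lapV_ne N w hw2])
    (by
      rw [lapV_zero]
      have := d_lower N (by omega)
      linarith)
    (fun w hw => (lapH_main N x0 y0 hx0 hy0 w hw).2)
  have gap2 : T * Gam N / 72 ≤ -(VV N ((x0 : ℤ), (y0 : ℤ)) * lap (HH N x0 y0) ((x0 : ℤ), (y0 : ℤ))) := by
    rw [lapH_z N x0 y0 hx0 hy0]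
    have hV : VV N ((x0 : ℤ), (y0 : ℤ)) = (lam N x0 - y0) ^ 2 / 2 - 1 / 2 := by simp [VV]
    rw [hV, mul_neg, neg_neg]
    set r := lam N x0 - y0 with hrdef
    rw [hlam0, ← hm]
    have e : (r ^ 2 / 2 - 1 / 2) * (Gam N / m ^ 3 * (m ^ 2 / 3) / r) = (r ^ 2 / 2 - 1 / 2) / r * (Gam N / (3 * m)) := by
      field_simp
    rw [e]
    have h1 : r / 4 ≤ (r ^ 2 / 2 - 1 / 2) / r := by
      rw [le_div_iff₀ (by linarith)]; nlinarith
    calc T * Gam N / 72 = (T * m / 6) / 4 * (Gam N / (3 * m)) := by field_simp; norm_num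
      _ ≤ (r ^ 2 / 2 - 1 / 2) / r * (Gam N / (3 * m)) := by
        apply mul_le_mul_of_nonneg_right _ (by positivity)
        linarith
  have sq := sum_HH_sq N x0 y0 hx0 hy0
  let s : ℝ := T / (100000 * Gam N)
  have hs : 0 < s := by simp only [s]; positivity
  refine ⟨fun w => s * HH N x0 y0 w, E, ?_, ?_, ?_, ?_, ?_⟩
  · intro w; exact mul_nonneg hs.le (HH_nonneg N x0 y0 hx0 w)
  · intro w
    have hb := HH_bd N x0 y0 hx0 hy0 w
    rw [← hm] at hb
    have := mul_le_mul_of_nonneg_left hb hs.le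
    refine this.trans ?_
    simp only [s]
    rw [div_mul_div_comm, div_le_div_iff₀ (by positivity) (by norm_num)]
    have : T * Gam N ≤ (2 * m) * Gam N := by
      apply mul_le_mul_of_nonneg_right _ hG0.le; linarith
    have : 0 ≤ m * Gam N := by positivity
    nlinarith
  · intro w hw; simp only [hE w hw, mul_zero]
  · intro w hw
    rw [lap_smul]
    exact mul_nonneg hs.le (lapH_main N x0 y0 hx0 hy0 w hw).1
  · have e1 : ∑ w ∈ E, s * HH N x0 y0 w = s * ∑ w ∈ E, HH N x0 y0 w := by rw [Finset.mul_sum]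
    have e2 : ∑ w ∈ E, (s * HH N x0 y0 w) ^ 2 = s ^ 2 * ∑ w ∈ E, HH N x0 y0 w ^ 2 := by
      rw [Finset.mul_sum]; apply Finset.sum_congr rfl; intros; ring
    rw [e1, e2]
    have g3 := mul_le_mul_of_nonneg_left (gap2.trans gap) hs.le
    have g4 : s ^ 2 * ∑ w ∈ E, HH N x0 y0 w ^ 2 ≤ s ^ 2 * (578 * Gam N ^ 2) :=
      mul_le_mul_of_nonneg_left sq (by positivity)
    have e3 : s * (T * Gam N / 72) = T ^ 2 / 7200000 := by
      simp only [s]; field_simp; norm_num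
    have e4 : s ^ 2 * (578 * Gam N ^ 2) = 578 / 10000000000 * T ^ 2 := by
      simp only [s]; field_simp; norm_num
    rw [e3] at g3
    rw [e4] at g4
    have : 0 ≤ T ^ 2 := sq_nonneg T
    linarith

lemma lap_refl (s t : ℤ) (hs : s = 1 ∨ s = -1) (ht : t = 1 ∨ t = -1) (h : ℤ × ℤ → ℝ) (w : ℤ × ℤ) :
    lap (fun v => h (s * v.1, t * v.2)) w = lap h (s * w.1, t * w.2) := by
  unfold lap
  rcases hs with rfl | rfl <;> rcases ht with rfl | rfl <;>
    simp [mul_add, sub_eq_add_neg] <;> first | ring1 | (split_ifs <;> ring1)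

lemma core (n : ℕ) (T : ℝ) (hT : 10 ≤ T) (z : ℤ × ℤ) (hz : z ∈ combD ((n : ℝ) - T)) :
    ∃ (h : ℤ × ℤ → ℝ) (E : Finset (ℤ × ℤ)), (∀ w, 0 ≤ h w) ∧ (∀ w, h w ≤ 1 / 2) ∧ (∀ w ∉ E, h w = 0) ∧
      (∀ w ≠ z, 0 ≤ lap h w) ∧
      1 / 20000000 * T ^ 2 ≤ ((combD (n : ℝ)).ncard : ℝ) * h (0, 0) - ∑ w ∈ E, h w - ∑ w ∈ E, h w ^ 2 := by
  classical
  obtain ⟨x, y⟩ := z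
  obtain ⟨h1, h2⟩ := hz
  simp only at h1 h2
  have hn : n ≠ 0 := by
    rintro rfl
    have := abs_nonneg (x : ℝ)
    simp at h1; linarith
  obtain ⟨N, rfl⟩ := Nat.exists_eq_succ_of_ne_zero hn
  have hsgn : ∀ x : ℤ, ∃ s : ℤ, (s = 1 ∨ s = -1) ∧ s * x = (x.natAbs : ℤ) := by
    intro x
    rcases le_total 0 x with h | h
    · exact ⟨1, Or.inl rfl, by omega⟩
    · exact ⟨-1, Or.inr rfl, by omega⟩
  obtain ⟨s, hs, hsx⟩ := hsgn x
  obtain ⟨t, ht, hty⟩ := hsgn y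
  have hax : (x.natAbs : ℝ) = |(x : ℝ)| := by rw [Nat.cast_natAbs]; simp
  have hay : (y.natAbs : ℝ) = |(y : ℝ)| := by rw [Nat.cast_natAbs]; simp
  push_cast at h1 h2
  obtain ⟨h, E, c0, c1, c2, c3, c4⟩ := core_pos N x.natAbs y.natAbs T hT (by rw [hax]; linarith) (by rw [hax, hay]; linarith)
  have hss : s * s = 1 := by rcases hs with rfl | rfl <;> rfl
  have htt : t * t = 1 := by rcases ht with rfl | rfl <;> rfl
  let σ : ℤ × ℤ → ℤ × ℤ := fun v => (s * v.1, t * v.2)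
  have hσσ : ∀ v, σ (σ v) = v := by
    intro v
    simp only [σ, ← mul_assoc, hss, htt, one_mul]
  have hinj : Function.Injective σ := fun a b hab => by
    rw [← hσσ a, hab, hσσ]
  refine ⟨fun v => h (σ v), E.image σ, fun w => c0 _, fun w => c1 _, ?_, ?_, ?_⟩
  · intro w hw
    apply c2
    intro hc
    exact hw (Finset.mem_image.mpr ⟨σ w, hc, hσσ w⟩)
  · intro w hw
    have := lap_refl s t hs ht h w
    simp only [σ]
    rw [this]
    apply c3
    intro hc
    apply hw
    have e : σ w = σ (x, y) := by
      simp only [σ, hsx, hty]; exact hc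
    exact hinj e
  · rw [Finset.sum_image (fun a _ b _ hab => hinj hab), Finset.sum_image (fun a _ b _ hab => hinj hab)]
    simp only [hσσ]
    have : σ (0, 0) = (0, 0) := by simp [σ]
    rw [this]
    exact c4
/-- **Proposition (inner fluctuations).** There is `κ_in > 0`, independent of `n`,
such that for any `a > 0` and `n` large enough,
`P(𝒟(n − a√(log n)) ⊄ A(n)) ≤ d(n) exp(−κ_in a² log n)`. -/
theorem comb_idla_inner_estimate :
    ∃ κ : ℝ, 0 < κ ∧
      ∀ a : ℝ, 0 < a → ∃ N : ℕ, ∀ n : ℕ, N ≤ n →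
        ∀ (Ω : Type*) [MeasurableSpace Ω] (P : Measure Ω) (W : ℕ → ℕ → Ω → ℤ × ℤ),
          IsIIDCombWalks P W →
          P {ω | ¬ combD ((n : ℝ) - a * Real.sqrt (Real.log n)) ⊆
              dlaCluster (fun i t => W i t ω) ((combD n).ncard)} ≤
            ENNReal.ofReal (((combD n).ncard : ℝ) * Real.exp (-κ * a ^ 2 * Real.log n)) := by
  refine ⟨1 / 20000000, by norm_num, ?_⟩
  intro a ha
  refine ⟨⌈Real.exp ((10 / a) ^ 2)⌉₊, ?_⟩
  intro n hn Ω _ P W hI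
  have hn1 : Real.exp ((10 / a) ^ 2) ≤ n := (Nat.le_ceil _).trans (by exact_mod_cast hn)
  have hnpos : (0 : ℝ) < n := (Real.exp_pos _).trans_le hn1
  have hlog : (10 / a) ^ 2 ≤ Real.log n := by
    rw [Real.le_log_iff_exp_le hnpos]; exact hn1
  have hlog0 : 0 ≤ Real.log n := le_trans (sq_nonneg _) hlog
  have hsq : 10 / a ≤ Real.sqrt (Real.log n) := Real.le_sqrt_of_sq_le hlog
  set T := a * Real.sqrt (Real.log n) with hTdef
  have hT : 10 ≤ T := by
    have := mul_le_mul_of_nonneg_left hsq ha.le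
    rwa [mul_div_cancel₀ _ ha.ne'] at this
  have hT2 : T ^ 2 = a ^ 2 * Real.log n := by
    rw [hTdef, mul_pow, Real.sq_sqrt hlog0]
  let F := (combD_finite ((n : ℝ) - T)).toFinset
  have hFc : F.card ≤ (combD (n : ℝ)).ncard := by
    rw [← Set.ncard_eq_toFinset_card _ (combD_finite ((n : ℝ) - T))]
    apply Set.ncard_le_ncard _ (combD_finite _)
    rintro ⟨x, y⟩ ⟨h1, h2⟩
    simp only at h1 h2
    have hx := abs_nonneg (x : ℝ)
    refine ⟨by simp only; linarith, ?_⟩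
    simp only
    refine h2.trans_le ?_
    have : ((n : ℝ) - T - |(x : ℝ)|) ^ 2 ≤ ((n : ℝ) - |(x : ℝ)|) ^ 2 :=
      pow_le_pow_left₀ (by linarith) (by linarith) 2
    linarith
  have hset : {ω | ¬ combD ((n : ℝ) - T) ⊆ dlaCluster (fun i t => W i t ω) ((combD (n : ℝ)).ncard)} ⊆
      ⋃ z ∈ F, {ω | z ∉ dlaCluster (fun i t => W i t ω) ((combD (n : ℝ)).ncard)} := by
    intro ω hω
    have hω' : ¬ combD ((n : ℝ) - T) ⊆ dlaCluster (fun i t => W i t ω) ((combD (n : ℝ)).ncard) := hω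
    rw [Set.not_subset] at hω'
    obtain ⟨z, hz, hz'⟩ := hω'
    rw [Set.mem_iUnion₂]
    exact ⟨z, (Set.Finite.mem_toFinset _).mpr hz, hz'⟩
  refine (measure_mono hset).trans ((measure_biUnion_finset_le _ _).trans ?_)
  have hb : ∀ z ∈ F, P {ω | z ∉ dlaCluster (fun i t => W i t ω) ((combD (n : ℝ)).ncard)} ≤
      ENNReal.ofReal (Real.exp (-(1 / 20000000) * a ^ 2 * Real.log n)) := by
    intro z hz
    obtain ⟨h, E, c0, c1, c2, c3, c4⟩ := core n T hT z ((Set.Finite.mem_toFinset _).mp hz)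
    refine (prob_bound hI z h E c0 c1 c2 c3 _).trans ?_
    apply ENNReal.ofReal_le_ofReal
    apply Real.exp_le_exp.mpr
    rw [hT2] at c4
    linarith
  refine (Finset.sum_le_card_nsmul _ _ _ hb).trans ?_
  rw [nsmul_eq_mul, ENNReal.ofReal_mul (by positivity), ENNReal.ofReal_natCast]
  gcongr
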